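/- Let t ≥ 2 be an integer and let c = (c_i)_{i≥1} be a cost vector of nonnegative reals with c_i ≥ 1 for all i ≥ t. For every ρ > 0 there exists n₀ such that for every n > n₀ and every simple graph G on n vertices, there exists a simple graph G̃ on n vertices such that θ_t(G, c) ≤ θ*_t(G̃, c) + ρ·n^t and π_t(G, c) ≤ π*_t(G̃, c) + ρ·n^t. -/

import Mathlib

open scoped Classical
open Finset

/-- `K` is a clique of `G`: a nonempty set of pairwise adjacent vertices. -/
def IsCliqueOf {V : Type} [Fintype V] [DecidableEq V] (G : SimpleGraph V) (K : Finset V) : Prop :=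
  K.Nonempty ∧ G.IsClique (K : Set V)

/-- Total `c`-cost of a weighting `f` of the finsets of vertices. -/
noncomputable def cliqueCost {V : Type} [Fintype V] [DecidableEq V]
    (c : ℕ → ℝ) (f : Finset V → ℝ) : ℝ :=
  ∑ K : Finset V, c K.card * f K

/-- `f` is a fractional `t`-clique cover of `G`. -/
def IsFracCover {V : Type} [Fintype V] [DecidableEq V]
    (t : ℕ) (G : SimpleGraph V) (f : Finset V → ℝ) : Prop :=
  (∀ K, 0 ≤ f K) ∧ (∀ K, ¬ IsCliqueOf G K → f K = 0) ∧
  ∀ T : Finset V, T.card = t → G.IsClique (T : Set V) →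
    1 ≤ ∑ K ∈ Finset.univ.filter (fun K => T ⊆ K), f K

/-- `f` is a fractional `t`-clique decomposition of `G`. -/
def IsFracDecomp {V : Type} [Fintype V] [DecidableEq V]
    (t : ℕ) (G : SimpleGraph V) (f : Finset V → ℝ) : Prop :=
  (∀ K, 0 ≤ f K) ∧ (∀ K, ¬ IsCliqueOf G K → f K = 0) ∧
  ∀ T : Finset V, T.card = t → G.IsClique (T : Set V) →
    ∑ K ∈ Finset.univ.filter (fun K => T ⊆ K), f K = 1

/-- `f` is an integer (`{0,1}`-valued) `t`-clique cover of `G`. -/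
def IsIntCover {V : Type} [Fintype V] [DecidableEq V]
    (t : ℕ) (G : SimpleGraph V) (f : Finset V → ℝ) : Prop :=
  IsFracCover t G f ∧ ∀ K, f K = 0 ∨ f K = 1

/-- `f` is an integer (`{0,1}`-valued) `t`-clique decomposition of `G`. -/
def IsIntDecomp {V : Type} [Fintype V] [DecidableEq V]
    (t : ℕ) (G : SimpleGraph V) (f : Finset V → ℝ) : Prop :=
  IsFracDecomp t G f ∧ ∀ K, f K = 0 ∨ f K = 1

/-- θ*_t(G,c): minimum total c-cost of a fractional t-clique cover. -/
noncomputable def thetaFrac {V : Type} [Fintype V] [DecidableEq V]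
    (t : ℕ) (G : SimpleGraph V) (c : ℕ → ℝ) : ℝ :=
  sInf { x | ∃ f, IsFracCover t G f ∧ x = cliqueCost c f }

/-- θ_t(G,c): minimum total c-cost of an integer t-clique cover. -/
noncomputable def thetaInt {V : Type} [Fintype V] [DecidableEq V]
    (t : ℕ) (G : SimpleGraph V) (c : ℕ → ℝ) : ℝ :=
  sInf { x | ∃ f, IsIntCover t G f ∧ x = cliqueCost c f }

/-- π*_t(G,c): minimum total c-cost of a fractional t-clique decomposition. -/
noncomputable def piFrac {V : Type} [Fintype V] [DecidableEq V]
    (t : ℕ) (G : SimpleGraph V) (c : ℕ → ℝ) : ℝ :=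
  sInf { x | ∃ f, IsFracDecomp t G f ∧ x = cliqueCost c f }

/-- π_t(G,c): minimum total c-cost of an integer t-clique decomposition. -/
noncomputable def piInt {V : Type} [Fintype V] [DecidableEq V]
    (t : ℕ) (G : SimpleGraph V) (c : ℕ → ℝ) : ℝ :=
  sInf { x | ∃ f, IsIntDecomp t G f ∧ x = cliqueCost c f }

/-- `G` is complete multipartite: vertices can be assigned to parts so that
adjacency holds exactly between distinct parts. -/
def IsCompleteMultipartite {V : Type} [Fintype V] [DecidableEq V]
    (G : SimpleGraph V) : Prop :=
  ∃ p : V → ℕ, ∀ u v, G.Adj u v ↔ p u ≠ p v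

set_option linter.unusedSectionVars false

/-! ### A random greedy matching in a weighted hypergraph -/

section Nibble

variable {Ω I : Type}

/-- No member of the family `M` meets the vertex set `A`. -/
def IsFree (e : I → Finset Ω) (M : Finset I) (A : Finset Ω) : Prop :=
  ∀ i ∈ M, Disjoint (e i) A

/-- Add `i` to `M` if it is disjoint from all members of `M`. -/
noncomputable def greedyStep (e : I → Finset Ω) (M : Finset I) (i : I) : Finset I :=
  if IsFree e M (e i) then insert i M else M

/-- The expectation of `F` after `k` rounds of the random greedy process which proposes `i` in
round `j` with probability `p j i`. -/
noncomputable def greedyExp [Fintype I] (e : I → Finset Ω) (p : ℕ → I → ℝ) :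
    ℕ → (Finset I → ℝ) → ℝ
  | 0, F => F ∅
  | k + 1, F => greedyExp e p k fun M => F M + ∑ i, p k i * (F (greedyStep e M i) - F M)

/-- The indicator of `IsFree`. -/
noncomputable def freeInd (e : I → Finset Ω) (A : Finset Ω) (M : Finset I) : ℝ :=
  if IsFree e M A then 1 else 0

lemma freeInd_greedyStep (e : I → Finset Ω) (A : Finset Ω) (M : Finset I) (i : I) :
    freeInd e A (greedyStep e M i) - freeInd e A M =
      -(if Disjoint (e i) A then 0 else freeInd e (A ∪ e i) M) := by
  have hU : IsFree e M (A ∪ e i) ↔ IsFree e M A ∧ IsFree e M (e i) := by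
    simp only [IsFree, Finset.disjoint_union_right]
    exact ⟨fun h => ⟨fun j hj => (h j hj).1, fun j hj => (h j hj).2⟩,
      fun h j hj => ⟨h.1 j hj, h.2 j hj⟩⟩
  unfold greedyStep freeInd
  by_cases h1 : IsFree e M (e i)
  · have hI : IsFree e (insert i M) A ↔ Disjoint (e i) A ∧ IsFree e M A := by
      simp [IsFree]
    by_cases h2 : Disjoint (e i) A <;> by_cases h3 : IsFree e M A <;> simp [h1, h2, h3, hU, hI]
  · simp [h1, hU]

/-- The members of `M` are pairwise disjoint. -/
def IsMatchingFamily (e : I → Finset Ω) (M : Finset I) : Prop :=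
  ∀ i ∈ M, ∀ j ∈ M, i ≠ j → Disjoint (e i) (e j)

lemma IsMatchingFamily.greedyStep {e : I → Finset Ω} {M : Finset I} (hM : IsMatchingFamily e M) (i : I) :
    IsMatchingFamily e (greedyStep e M i) := by
  unfold _root_.greedyStep
  split_ifs with h
  · intro a ha b hb hab
    rw [Finset.mem_insert] at ha hb
    rcases ha with rfl | ha <;> rcases hb with rfl | hb
    · exact absurd rfl hab
    · exact (h b hb).symm
    · exact h a ha
    · exact hM a ha b hb hab
  · exact hM

section

variable [Fintype I] (e : I → Finset Ω) (p : ℕ → I → ℝ)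

lemma greedyExp_add (k : ℕ) (F G : Finset I → ℝ) :
    greedyExp e p k (fun M => F M + G M) = greedyExp e p k F + greedyExp e p k G := by
  induction k generalizing F G with
  | zero => rfl
  | succ k ih =>
    simp only [greedyExp]
    rw [← ih]
    congr 1
    funext M
    have : ∀ i, p k i * (F (greedyStep e M i) + G (greedyStep e M i) - (F M + G M)) =
      p k i * (F (greedyStep e M i) - F M) + p k i * (G (greedyStep e M i) - G M) :=
      fun i => by ring
    simp only [this, Finset.sum_add_distrib]
    ring

lemma greedyExp_smul (k : ℕ) (a : ℝ) (F : Finset I → ℝ) :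
    greedyExp e p k (fun M => a * F M) = a * greedyExp e p k F := by
  induction k generalizing F with
  | zero => rfl
  | succ k ih =>
    simp only [greedyExp]
    rw [← ih]
    congr 1
    funext M
    rw [mul_add, Finset.mul_sum]
    congr 1
    exact Finset.sum_congr rfl fun i _ => by ring

lemma greedyExp_sum {ι : Type} (k : ℕ) (s : Finset ι) (F : ι → Finset I → ℝ) :
    greedyExp e p k (fun M => ∑ j ∈ s, F j M) = ∑ j ∈ s, greedyExp e p k (F j) := by
  induction s using Finset.induction_on with
  | empty => simpa using greedyExp_smul e p k 0 (fun _ => 0)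
  | insert j s hj ih => simp only [Finset.sum_insert hj, greedyExp_add, ih]

lemma greedyExp_const (k : ℕ) (a : ℝ) : greedyExp e p k (fun _ => a) = a := by
  induction k with
  | zero => rfl
  | succ k ih => simpa [greedyExp] using ih

variable {e p}

lemma greedyExp_mono {N : ℕ} (hp : ∀ k < N, ∀ i, 0 ≤ p k i) (hs : ∀ k < N, ∑ i, p k i ≤ 1)
    {k : ℕ} (hk : k ≤ N) {F G : Finset I → ℝ} (h : ∀ M, IsMatchingFamily e M → F M ≤ G M) :
    greedyExp e p k F ≤ greedyExp e p k G := by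
  induction k generalizing F G with
  | zero => exact h _ (by simp [IsMatchingFamily])
  | succ k ih =>
    refine ih (by omega) fun M hM => ?_
    have key : ∀ F : Finset I → ℝ, F M + ∑ i, p k i * (F (greedyStep e M i) - F M) =
        (1 - ∑ i, p k i) * F M + ∑ i, p k i * F (greedyStep e M i) := by
      intro F
      simp only [mul_sub, Finset.sum_sub_distrib, ← Finset.sum_mul]
      ring
    rw [key F, key G]
    refine add_le_add (mul_le_mul_of_nonneg_left (h M hM) (by linarith [hs k hk])) ?_
    exact Finset.sum_le_sum fun i _ =>
      mul_le_mul_of_nonneg_left (h _ (hM.greedyStep i)) (hp k hk i)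

lemma exists_le_greedyExp {N : ℕ} (hp : ∀ k < N, ∀ i, 0 ≤ p k i) (hs : ∀ k < N, ∑ i, p k i ≤ 1)
    {k : ℕ} (hk : k ≤ N) (F : Finset I → ℝ) :
    ∃ M, IsMatchingFamily e M ∧ F M ≤ greedyExp e p k F := by
  by_contra! hcon
  obtain ⟨M₀, hM₀, hmin⟩ := Finset.exists_min_image
    (Finset.univ.filter fun M : Finset I => IsMatchingFamily e M) F
    ⟨∅, Finset.mem_filter.mpr ⟨Finset.mem_univ _, by simp [IsMatchingFamily]⟩⟩
  have h1 : greedyExp e p k (fun _ => F M₀) ≤ greedyExp e p k F :=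
    greedyExp_mono hp hs hk fun M hM => hmin M (by simp [hM])
  rw [greedyExp_const] at h1
  exact absurd (hcon M₀ (by simpa using hM₀)) (not_lt.mpr h1)

lemma greedyExp_freeInd_succ (k : ℕ) (A : Finset Ω) :
    greedyExp e p (k + 1) (freeInd e A) = greedyExp e p k (freeInd e A) -
      ∑ i, p k i * (if Disjoint (e i) A then 0 else greedyExp e p k (freeInd e (A ∪ e i))) := by
  simp only [greedyExp, freeInd_greedyStep]
  rw [greedyExp_add, greedyExp_sum, sub_eq_add_neg, ← Finset.sum_neg_distrib]
  congr 1
  refine Finset.sum_congr rfl fun i _ => ?_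
  rw [greedyExp_smul]
  split_ifs
  · simp [greedyExp_const]
  · rw [← neg_one_mul, mul_left_comm, ← greedyExp_smul e p k (-1)]
    simp

lemma greedyExp_cost_succ (he : ∀ i, (e i).Nonempty) (k : ℕ) (cost : I → ℝ) :
    greedyExp e p (k + 1) (fun M => ∑ i ∈ M, cost i) =
      greedyExp e p k (fun M => ∑ i ∈ M, cost i) +
        ∑ i, p k i * (cost i * greedyExp e p k (freeInd e (e i))) := by
  have hstep : ∀ M i, ∑ j ∈ greedyStep e M i, cost j - ∑ j ∈ M, cost j =
      cost i * freeInd e (e i) M := by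
    intro M i
    unfold greedyStep freeInd
    split_ifs with h
    · have hi : i ∉ M := fun hi => (he i).ne_empty (Finset.disjoint_self_iff_empty _ |>.mp (h i hi))
      rw [Finset.sum_insert hi]
      ring
    · simp
  simp only [greedyExp, hstep]
  rw [greedyExp_add, greedyExp_sum]
  congr 1
  exact Finset.sum_congr rfl fun i _ => by rw [greedyExp_smul, greedyExp_smul]

lemma greedyExp_freeInd_mem_Icc {N : ℕ} (hp : ∀ k < N, ∀ i, 0 ≤ p k i)
    (hs : ∀ k < N, ∑ i, p k i ≤ 1) {k : ℕ} (hk : k ≤ N) (A : Finset Ω) :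
    0 ≤ greedyExp e p k (freeInd e A) ∧ greedyExp e p k (freeInd e A) ≤ 1 := by
  constructor
  · rw [← greedyExp_const e p k 0]
    exact greedyExp_mono hp hs hk fun M _ => by unfold freeInd; split_ifs <;> norm_num
  · rw [← greedyExp_const e p k 1]
    exact greedyExp_mono hp hs hk fun M _ => by unfold freeInd; split_ifs <;> norm_num

end

end Nibble

section NibbleAnalysis

variable {Ω I : Type} [Fintype I]

/-- The weights `w` form a perfect fractional matching of the vertex set `X`, the edges have at
most `r` vertices, and all codegrees are at most `δ`. -/
structure IsFracMatching (e : I → Finset Ω) (w : I → ℝ) (X : Finset Ω) (r : ℕ) (δ : ℝ) :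
    Prop where
  nonneg : ∀ i, 0 ≤ w i
  nonempty : ∀ i, (e i).Nonempty
  subset : ∀ i, e i ⊆ X
  card_le : ∀ i, (e i).card ≤ r
  degree : ∀ x ∈ X, ∑ i, (if x ∈ e i then w i else 0) = 1
  codegree : ∀ x ∈ X, ∀ y ∈ X, x ≠ y → ∑ i, (if x ∈ e i ∧ y ∈ e i then w i else 0) ≤ δ

variable {e : I → Finset Ω} {w : I → ℝ} {X : Finset Ω} {r : ℕ} {δ : ℝ}

lemma IsFracMatching.sum_card_inter (hF : IsFracMatching e w X r δ) {A : Finset Ω}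
    (hA : A ⊆ X) : ∑ i, w i * ((A ∩ e i).card : ℝ) = A.card := by
  have h : ∀ i, w i * ((A ∩ e i).card : ℝ) = ∑ x ∈ A, if x ∈ e i then w i else 0 := by
    intro i
    rw [← Finset.filter_mem_eq_inter, ← Finset.sum_filter, Finset.sum_const, nsmul_eq_mul]
    ring
  simp only [h]
  rw [Finset.sum_comm, Finset.sum_congr rfl fun x hx => hF.degree x (hA hx)]
  simp

lemma IsFracMatching.sum_offDiag_inter (hF : IsFracMatching e w X r δ) (hδ : 0 ≤ δ)
    {A : Finset Ω} (hA : A ⊆ X) :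
    ∑ i, w i * ((A ∩ e i).offDiag.card : ℝ) ≤ (A.card : ℝ) ^ 2 * δ := by
  have h : ∀ i, w i * ((A ∩ e i).offDiag.card : ℝ) =
      ∑ x ∈ A.offDiag, if x.1 ∈ e i ∧ x.2 ∈ e i then w i else 0 := by
    intro i
    rw [← Finset.sum_filter, Finset.sum_const, nsmul_eq_mul, mul_comm]
    congr 3
    ext x
    simp only [Finset.mem_offDiag, Finset.mem_inter, Finset.mem_filter]
    tauto
  simp only [h]
  rw [Finset.sum_comm]
  calc _ ≤ ∑ x ∈ A.offDiag, δ := Finset.sum_le_sum fun x hx => by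
        rw [Finset.mem_offDiag] at hx
        exact hF.codegree _ (hA hx.1) _ (hA hx.2.1) hx.2.2
    _ = (A.offDiag.card : ℝ) * δ := by simp
    _ ≤ _ := by
        gcongr
        rw [Finset.offDiag_card]
        exact_mod_cast (Nat.sub_le _ _).trans (by rw [sq])

lemma IsFracMatching.drift (hF : IsFracMatching e w X r δ) (hδ : 0 ≤ δ)
    {A : Finset Ω} (hA : A ⊆ X) {x : ℝ} (hx : 0 < x) (hx1 : x ≤ 1) :
    |(A.card : ℝ) * x ^ A.card - ∑ i, w i / x ^ ((e i).card - 1) *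
      (if Disjoint (e i) A then 0 else x ^ (A ∪ e i).card)| ≤ (A.card : ℝ) ^ 2 * δ := by
  rw [← hF.sum_card_inter hA, Finset.sum_mul, ← Finset.sum_sub_distrib, hF.sum_card_inter hA]
  refine (Finset.abs_sum_le_sum_abs _ _).trans
    ((Finset.sum_le_sum fun i _ => ?_).trans (hF.sum_offDiag_inter hδ hA))
  set m := (A ∩ e i).card with hm
  have hmA : m ≤ A.card := Finset.card_le_card Finset.inter_subset_left
  split_ifs with hd
  · have : m = 0 := by
      rw [hm, Finset.card_eq_zero, Finset.inter_comm]
      exact Finset.disjoint_iff_inter_eq_empty.mp hd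
    have h0 := mul_nonneg (hF.nonneg i) (Nat.cast_nonneg (α := ℝ) (A ∩ e i).offDiag.card)
    simpa [this] using h0
  · have hm1 : 1 ≤ m := by
      rw [hm, Nat.one_le_iff_ne_zero, Ne, Finset.card_eq_zero, Finset.inter_comm]
      exact fun h => hd (Finset.disjoint_iff_inter_eq_empty.mpr h)
    have hcard : (A ∪ e i).card = (A.card + 1 - m) + ((e i).card - 1) := by
      have h1 := Finset.card_union_add_card_inter A (e i)
      have h2 := (hF.nonempty i).card_pos
      omega
    have hE : w i / x ^ ((e i).card - 1) * x ^ (A ∪ e i).card = w i * x ^ (A.card + 1 - m) := by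
      rw [hcard, pow_add]
      field_simp
    rw [hE, mul_assoc, ← mul_sub, abs_mul, abs_of_nonneg (hF.nonneg i)]
    refine mul_le_mul_of_nonneg_left ?_ (hF.nonneg i)
    rw [Finset.offDiag_card, ← hm]
    rcases hm1.eq_or_lt with h1 | h2
    · rw [← h1]
      simp
    · have hp1 : x ^ A.card ≤ 1 := pow_le_one₀ hx.le hx1
      have hp2 : x ^ (A.card + 1 - m) ≤ 1 := pow_le_one₀ hx.le hx1
      have hp3 : 0 < x ^ A.card := pow_pos hx _
      have hp4 : 0 < x ^ (A.card + 1 - m) := pow_pos hx _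
      have hm2 : (2 : ℝ) ≤ m := by exact_mod_cast h2
      have hle : m ≤ m * m - m := by
        have : 2 * m ≤ m * m := Nat.mul_le_mul_right m h2
        omega
      have hle' : (m : ℝ) ≤ ((m * m - m : ℕ) : ℝ) := by exact_mod_cast hle
      refine le_trans ?_ hle'
      rw [abs_le]
      constructor <;> nlinarith

lemma abs_one_sub_pow_le {h : ℝ} (h0 : 0 ≤ h) (h1 : h ≤ 1) (a : ℕ) :
    |1 - (1 - h) ^ a - h * a| ≤ h ^ 2 * (a : ℝ) ^ 2 := by
  have hlow : 1 - a * h ≤ (1 - h) ^ a := by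
    have := one_add_mul_le_pow (a := -h) (by linarith) a
    simpa [sub_eq_add_neg, mul_neg] using this
  have hup : (1 - h) ^ a ≤ 1 - a * h + (a : ℝ) ^ 2 * h ^ 2 := by
    induction a with
    | zero => simp
    | succ a ih =>
      have hlow' : 1 - a * h ≤ (1 - h) ^ a := by
        have := one_add_mul_le_pow (a := -h) (by linarith) a
        simpa [sub_eq_add_neg, mul_neg] using this
      have ih' := mul_le_mul_of_nonneg_right (ih hlow') (show 0 ≤ 1 - h by linarith)
      rw [pow_succ]
      push_cast
      have : 0 ≤ (a : ℝ) ^ 2 * h ^ 3 := by positivity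
      have : 0 ≤ (a : ℝ) * h ^ 2 := by positivity
      nlinarith [sq_nonneg h]
  rw [abs_le]
  constructor <;> nlinarith [mul_nonneg (sq_nonneg h) (sq_nonneg (a : ℝ))]

/-- One step of the error recursion for the probability that a set stays free. -/
lemma IsFracMatching.error_step (hF : IsFracMatching e w X r δ) {x z h η C : ℝ}
    (hδ : 0 ≤ δ) (hh0 : 0 ≤ h) (hh1 : h ≤ 1) (hhδ : h ≤ δ) (hδη : 2 * δ ≤ η)
    (hx : 0 < x) (hx1 : x ≤ 1) (hC : (x ^ r)⁻¹ ≤ C) (hz : 2 ≤ z) (hz4 : z ≤ 4)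
    {q : Finset Ω → ℝ} (hq0 : q ∅ = 1)
    (hq : ∀ A, A ⊆ X → |q A - x ^ A.card| ≤ η * z ^ A.card) {A : Finset Ω} (hA : A ⊆ X) :
    |q A - ∑ i, h * w i / x ^ ((e i).card - 1) *
        (if Disjoint (e i) A then 0 else q (A ∪ e i)) - (x * (1 - h)) ^ A.card| ≤
      η * (z + h * (C * 4 ^ (r + 1) + 1)) ^ A.card := by
  have hη : 0 ≤ η := by linarith
  rcases A.eq_empty_or_nonempty with rfl | hne
  · simp [hq0, hη]
  obtain ⟨b, hb⟩ : ∃ b, A.card = b + 1 := ⟨A.card - 1, by have := hne.card_pos; omega⟩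
  have hC0 : 0 ≤ C := le_trans (by positivity) hC
  have hz0 : 0 ≤ z := by linarith
  set E : ℝ := ∑ i, h * w i / x ^ ((e i).card - 1) *
        (if Disjoint (e i) A then 0 else (q (A ∪ e i) - x ^ (A ∪ e i).card)) with hE
  set S : ℝ := ∑ i, w i / x ^ ((e i).card - 1) *
        (if Disjoint (e i) A then 0 else x ^ (A ∪ e i).card) with hS
  have hsum : ∑ i, h * w i / x ^ ((e i).card - 1) *
        (if Disjoint (e i) A then 0 else q (A ∪ e i)) = E + h * S := by
    rw [hE, hS, Finset.mul_sum, ← Finset.sum_add_distrib]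
    refine Finset.sum_congr rfl fun i _ => ?_
    split_ifs <;> ring
  have hEle : |E| ≤ h * (A.card * (C * (η * z ^ (A.card + r)))) := by
    rw [← hF.sum_card_inter hA, Finset.sum_mul, Finset.mul_sum]
    refine (Finset.abs_sum_le_sum_abs _ _).trans (Finset.sum_le_sum fun i _ => ?_)
    have hw := hF.nonneg i
    split_ifs with hd
    · simp only [mul_zero, abs_zero]
      positivity
    · have hm1 : (1 : ℝ) ≤ (A ∩ e i).card := by
        have : (A ∩ e i).card ≠ 0 := by
          rw [Ne, Finset.card_eq_zero, Finset.inter_comm]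
          exact fun h => hd (Finset.disjoint_iff_inter_eq_empty.mpr h)
        exact_mod_cast Nat.one_le_iff_ne_zero.mpr this
      have hq1 : |q (A ∪ e i) - x ^ (A ∪ e i).card| ≤ η * z ^ (A.card + r) := by
        refine (hq _ (Finset.union_subset hA (hF.subset i))).trans ?_
        refine mul_le_mul_of_nonneg_left (pow_le_pow_right₀ (by linarith) ?_) hη
        exact (Finset.card_union_le _ _).trans (by have := hF.card_le i; omega)
      have hx2 : (x ^ ((e i).card - 1))⁻¹ ≤ C := by
        refine le_trans ?_ hC
        refine inv_anti₀ (pow_pos hx _) (pow_le_pow_of_le_one hx.le hx1 ?_)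
        have := hF.card_le i
        omega
      rw [abs_mul, abs_of_nonneg (by positivity), div_eq_mul_inv]
      calc h * w i * (x ^ ((e i).card - 1))⁻¹ * |q (A ∪ e i) - x ^ (A ∪ e i).card|
          ≤ h * w i * C * (η * z ^ (A.card + r)) := by gcongr
        _ = h * (w i * 1 * (C * (η * z ^ (A.card + r)))) := by ring
        _ ≤ _ := by gcongr
  have hSle := hF.drift hδ hA hx hx1
  rw [← hS] at hSle
  have hxa : 0 ≤ x ^ A.card := by positivity
  have hxa1 : x ^ A.card ≤ 1 := pow_le_one₀ hx.le hx1
  have hpow : |x ^ A.card - (x * (1 - h)) ^ A.card - h * (A.card * x ^ A.card)| ≤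
      h ^ 2 * (A.card : ℝ) ^ 2 := by
    have h1 := abs_one_sub_pow_le hh0 hh1 A.card
    rw [mul_pow, show x ^ A.card - x ^ A.card * (1 - h) ^ A.card - h * (A.card * x ^ A.card) =
      x ^ A.card * (1 - (1 - h) ^ A.card - h * A.card) by ring, abs_mul, abs_of_nonneg hxa]
    calc _ ≤ 1 * |1 - (1 - h) ^ A.card - h * A.card| := by gcongr
      _ ≤ _ := by rw [one_mul]; exact h1
  rw [hsum, show q A - (E + h * S) - (x * (1 - h)) ^ A.card =
    (q A - x ^ A.card) - E + (x ^ A.card - (x * (1 - h)) ^ A.card - h * (A.card * x ^ A.card))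
      + h * (A.card * x ^ A.card - S) by ring]
  have hbase := hq A hA
  have hhS : |h * (A.card * x ^ A.card - S)| ≤ h * ((A.card : ℝ) ^ 2 * δ) := by
    rw [abs_mul, abs_of_nonneg hh0]
    gcongr
  have htri := abs_add_le ((q A - x ^ A.card) - E +
    (x ^ A.card - (x * (1 - h)) ^ A.card - h * (A.card * x ^ A.card))) (h * (A.card * x ^ A.card - S))
  have htri2 := abs_add_le ((q A - x ^ A.card) - E)
    (x ^ A.card - (x * (1 - h)) ^ A.card - h * (A.card * x ^ A.card))
  have htri3 := abs_sub (q A - x ^ A.card) E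
  have hbern : z ^ (b + 1) + (b + 1) * z ^ b * (h * (C * 4 ^ (r + 1) + 1)) ≤
      (z + h * (C * 4 ^ (r + 1) + 1)) ^ (b + 1) := by
    simpa using pow_add_mul_le_add_pow hz0
      (show 0 ≤ 2 * z + h * (C * 4 ^ (r + 1) + 1) by positivity) (b + 1)
  have hz4' : z ^ (r + 1) ≤ 4 ^ (r + 1) := by gcongr
  have hmain : h * (A.card * (C * (η * z ^ (A.card + r)))) ≤
      η * ((b + 1) * z ^ b * (h * (C * 4 ^ (r + 1)))) := by
    rw [hb, show b + 1 + r = b + (r + 1) by ring, pow_add]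
    push_cast
    calc h * ((b + 1) * (C * (η * (z ^ b * z ^ (r + 1)))))
        ≤ h * ((b + 1) * (C * (η * (z ^ b * 4 ^ (r + 1))))) := by gcongr
      _ = _ := by ring
  have hforce : h ^ 2 * (A.card : ℝ) ^ 2 + h * ((A.card : ℝ) ^ 2 * δ) ≤
      η * ((b + 1) * z ^ b * h) := by
    have hb2 : ((b : ℝ) + 1) ≤ 2 ^ b := by exact_mod_cast Nat.lt_two_pow_self (n := b)
    have hbz : (2 : ℝ) ^ b ≤ z ^ b := by gcongr
    rw [hb]
    push_cast
    calc h ^ 2 * ((b : ℝ) + 1) ^ 2 + h * (((b : ℝ) + 1) ^ 2 * δ)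
        ≤ h * δ * ((b : ℝ) + 1) ^ 2 + h * (((b : ℝ) + 1) ^ 2 * δ) := by
          rw [sq h]; gcongr
      _ = (2 * δ) * h * (b + 1) * (b + 1) := by ring
      _ ≤ η * h * (b + 1) * z ^ b := by
          gcongr
          linarith
      _ = _ := by ring
  rw [hb] at hbase ⊢
  rw [hb] at htri htri2 htri3 hEle hpow hhS hmain hforce
  calc _ ≤ η * z ^ (b + 1) + η * ((b + 1) * z ^ b * (h * (C * 4 ^ (r + 1))))
        + η * ((b + 1) * z ^ b * h) := by linarith
    _ = η * (z ^ (b + 1) + (b + 1) * z ^ b * (h * (C * 4 ^ (r + 1) + 1))) := by ring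
    _ ≤ _ := by gcongr

end NibbleAnalysis

section NibbleTheorem

variable {Ω I : Type} [Fintype I]

/-- The proposal probabilities of the random greedy process. -/
noncomputable def nibbleRate (e : I → Finset Ω) (w : I → ℝ) (h : ℝ) (k : ℕ) (i : I) : ℝ :=
  h * w i / ((1 - h) ^ k) ^ ((e i).card - 1)

variable {e : I → Finset Ω} {w : I → ℝ} {X : Finset Ω} {r : ℕ} {δ : ℝ}

lemma IsFracMatching.nibbleRate_le (hF : IsFracMatching e w X r δ) {h C : ℝ} {k : ℕ}
    (hh0 : 0 ≤ h) (hh1 : h < 1) (hC : (((1 - h) ^ k) ^ r)⁻¹ ≤ C) (i : I) :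
    nibbleRate e w h k i ≤ h * w i * C := by
  have hx : 0 < (1 - h) ^ k := pow_pos (by linarith) _
  have hx1 : (1 - h) ^ k ≤ 1 := pow_le_one₀ (by linarith) (by linarith)
  rw [nibbleRate, div_eq_mul_inv]
  refine mul_le_mul_of_nonneg_left (le_trans ?_ hC) (mul_nonneg hh0 (hF.nonneg i))
  refine inv_anti₀ (pow_pos hx _) (pow_le_pow_of_le_one hx.le hx1 ?_)
  have := hF.card_le i
  omega

lemma IsFracMatching.nibbleRate_nonneg (hF : IsFracMatching e w X r δ) {h : ℝ} (k : ℕ)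
    (hh0 : 0 ≤ h) (hh1 : h < 1) (i : I) : 0 ≤ nibbleRate e w h k i :=
  div_nonneg (mul_nonneg hh0 (hF.nonneg i)) (pow_nonneg (pow_nonneg (by linarith) _) _)

lemma IsFracMatching.free_error (hF : IsFracMatching e w X r δ) {h C : ℝ} {N L : ℕ}
    (hδ : 0 ≤ δ) (hh0 : 0 ≤ h) (hh1 : h < 1) (hhδ : h ≤ δ)
    (hC : ∀ k ≤ N, (((1 - h) ^ k) ^ r)⁻¹ ≤ C)
    (hs : ∀ k < N, ∑ i, nibbleRate e w h k i ≤ 1)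
    (hL : L * (h * (C * 4 ^ (r + 1) + 1)) ≤ 2) (j : ℕ) {η : ℝ} (hη0 : 0 < η) (hη1 : η ≤ 1)
    (hδη : 2 * δ ≤ η ^ 2 ^ j) {k : ℕ} (hk : k ≤ N) (hkj : k ≤ j * L) {A : Finset Ω} (hA : A ⊆ X) :
    |greedyExp e (nibbleRate e w h) k (freeInd e A) - ((1 - h) ^ k) ^ A.card| ≤
      η * 2 ^ A.card := by
  induction j generalizing η k A with
  | zero =>
    obtain rfl : k = 0 := by omega
    have : freeInd e A ∅ = 1 := by simp [freeInd, IsFree]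
    simp only [greedyExp, this, pow_zero, one_pow, sub_self, abs_zero]
    positivity
  | succ j ih =>
    have hC0 : 0 ≤ C := le_trans (by simp) (hC 0 (by omega))
    have hD0 : 0 ≤ h * (C * 4 ^ (r + 1) + 1) := by positivity
    have hsq0 : 0 < η ^ 2 := by positivity
    have hsq1 : η ^ 2 ≤ 1 := pow_le_one₀ hη0.le hη1
    have hδη' : 2 * δ ≤ (η ^ 2) ^ 2 ^ j := by rwa [← pow_mul, ← pow_succ']
    have hp : ∀ k < N, ∀ i, 0 ≤ nibbleRate e w h k i :=
      fun k _ i => hF.nibbleRate_nonneg k hh0 hh1 i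
    have window : ∀ l ≤ L, j * L + l ≤ N → ∀ A ⊆ X,
        |greedyExp e (nibbleRate e w h) (j * L + l) (freeInd e A) -
          ((1 - h) ^ (j * L + l)) ^ A.card| ≤
        η ^ 2 * (2 + l * (h * (C * 4 ^ (r + 1) + 1))) ^ A.card := by
      intro l
      induction l with
      | zero =>
        intro _ hN A hA
        simpa using ih hsq0 hsq1 hδη' hN le_rfl hA
      | succ l ihl =>
        intro hl hN A hA
        have hz : (l : ℝ) * (h * (C * 4 ^ (r + 1) + 1)) ≤ 2 := by
          refine le_trans (mul_le_mul_of_nonneg_right ?_ hD0) hL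
          exact_mod_cast (by omega : l ≤ L)
        have step := hF.error_step hδ hh0 hh1.le hhδ
          (hδη'.trans (pow_le_of_le_one hsq0.le hsq1 (by positivity)))
          (pow_pos (by linarith) (j * L + l)) (pow_le_one₀ (by linarith) (by linarith))
          (hC (j * L + l) (by omega)) (z := 2 + l * (h * (C * 4 ^ (r + 1) + 1)))
          (by nlinarith [mul_nonneg (Nat.cast_nonneg (α := ℝ) l) hD0]) (by linarith)
          (q := fun A => greedyExp e (nibbleRate e w h) (j * L + l) (freeInd e A))
          (by
            have : freeInd e (∅ : Finset Ω) = fun _ => 1 := by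
              funext M; simp [freeInd, IsFree]
            simp only [this, greedyExp_const])
          (ihl (by omega) (by omega)) hA
        rw [← add_assoc, greedyExp_freeInd_succ, pow_succ (1 - h)]
        refine le_trans (le_of_eq ?_) (step.trans (le_of_eq ?_))
        · rfl
        · push_cast
          ring
    rcases le_or_gt k (j * L) with hk' | hk'
    · refine (ih hsq0 hsq1 hδη' hk hk' hA).trans ?_
      gcongr
      nlinarith
    · obtain ⟨l, rfl⟩ := Nat.exists_eq_add_of_le hk'.le
      have hlL : l ≤ L := by rw [Nat.succ_mul] at hkj; omega
      by_cases hsmall : η * 2 ^ A.card ≤ 1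
      · refine (window l hlL hk A hA).trans ?_
        have hz : (l : ℝ) * (h * (C * 4 ^ (r + 1) + 1)) ≤ 2 := by
          refine le_trans (mul_le_mul_of_nonneg_right ?_ hD0) hL
          exact_mod_cast hlL
        have hz0 : 0 ≤ (l : ℝ) * (h * (C * 4 ^ (r + 1) + 1)) := by positivity
        calc η ^ 2 * (2 + l * (h * (C * 4 ^ (r + 1) + 1))) ^ A.card
            ≤ η ^ 2 * (2 ^ 2) ^ A.card := by
              gcongr
              linarith
          _ = (η * 2 ^ A.card) * (η * 2 ^ A.card) := by rw [← pow_mul, mul_comm 2, pow_mul]; ring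
          _ ≤ 1 * (η * 2 ^ A.card) := by gcongr
          _ = _ := one_mul _
      · have hq := greedyExp_freeInd_mem_Icc (e := e) hp hs hk A
        have hx0 : 0 ≤ ((1 - h) ^ (j * L + l)) ^ A.card :=
          pow_nonneg (pow_nonneg (by linarith) _) _
        have hx1 : ((1 - h) ^ (j * L + l)) ^ A.card ≤ 1 :=
          pow_le_one₀ (pow_nonneg (by linarith) _) (pow_le_one₀ (by linarith) (by linarith))
        rw [abs_le]
        constructor <;> linarith

lemma IsFracMatching.cost_le (hF : IsFracMatching e w X r δ) {h C η : ℝ} {N : ℕ}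
    (hh0 : 0 ≤ h) (hh1 : h < 1) (hη : 0 ≤ η)
    (hC : ∀ k ≤ N, (((1 - h) ^ k) ^ r)⁻¹ ≤ C)
    (herr : ∀ k ≤ N, ∀ A ⊆ X, |greedyExp e (nibbleRate e w h) k (freeInd e A) -
      ((1 - h) ^ k) ^ A.card| ≤ η * 2 ^ A.card)
    {cost : I → ℝ} (hcost : ∀ i, 0 ≤ cost i) {k : ℕ} (hk : k ≤ N) :
    greedyExp e (nibbleRate e w h) k (fun M => ∑ i ∈ M, cost i) ≤
      (1 - (1 - h) ^ k + k * h * (C * (η * 2 ^ r))) * ∑ i, w i * cost i := by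
  induction k with
  | zero => simp [greedyExp]
  | succ k ih =>
    rw [greedyExp_cost_succ hF.nonempty]
    have hx : 0 < (1 - h) ^ k := pow_pos (by linarith) _
    have hterm : ∀ i, nibbleRate e w h k i *
        (cost i * greedyExp e (nibbleRate e w h) k (freeInd e (e i))) ≤
        h * ((1 - h) ^ k + C * (η * 2 ^ r)) * (w i * cost i) := by
      intro i
      have hq := (abs_le.mp (herr k (by omega) (e i) (hF.subset i))).2
      have hrate := hF.nibbleRate_le hh0 hh1 (hC k (by omega)) i
      have hrate0 := hF.nibbleRate_nonneg k hh0 hh1 i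
      have hpow : (2 : ℝ) ^ (e i).card ≤ 2 ^ r := pow_le_pow_right₀ (by norm_num) (hF.card_le i)
      have hw := hF.nonneg i
      have hci := hcost i
      have hcard : (e i).card = ((e i).card - 1) + 1 := by
        have := (hF.nonempty i).card_pos
        omega
      have hmain : nibbleRate e w h k i * ((1 - h) ^ k) ^ (e i).card = h * w i * (1 - h) ^ k := by
        rw [nibbleRate, hcard, pow_succ, Nat.add_sub_cancel]
        field_simp
      calc nibbleRate e w h k i *
            (cost i * greedyExp e (nibbleRate e w h) k (freeInd e (e i)))
          ≤ nibbleRate e w h k i * (cost i * (((1 - h) ^ k) ^ (e i).card + η * 2 ^ r)) := by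
            gcongr
            nlinarith
        _ = cost i * (nibbleRate e w h k i * ((1 - h) ^ k) ^ (e i).card)
            + nibbleRate e w h k i * (cost i * (η * 2 ^ r)) := by ring
        _ ≤ cost i * (h * w i * (1 - h) ^ k) + h * w i * C * (cost i * (η * 2 ^ r)) := by
            rw [hmain]
            gcongr
        _ = _ := by ring
    refine (add_le_add (ih (by omega)) (Finset.sum_le_sum fun i _ => hterm i)).trans
      (le_of_eq ?_)
    rw [← Finset.mul_sum, ← add_mul]
    congr 1
    push_cast
    rw [pow_succ]
    ring

lemma IsFracMatching.sum_le_card (hF : IsFracMatching e w X r δ) : ∑ i, w i ≤ X.card := by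
  rw [← hF.sum_card_inter subset_rfl]
  refine Finset.sum_le_sum fun i _ => le_mul_of_one_le_right (hF.nonneg i) ?_
  rw [Finset.inter_eq_right.mpr (hF.subset i)]
  exact_mod_cast (hF.nonempty i).card_pos

lemma exp_neg_two_mul_le_one_sub {h : ℝ} (h0 : 0 ≤ h) (h1 : h ≤ 1 / 2) :
    Real.exp (-(2 * h)) ≤ 1 - h := by
  rw [Real.exp_neg]
  refine inv_le_of_inv_le₀ (by linarith) ?_
  refine le_trans ?_ (Real.add_one_le_exp (2 * h))
  rw [inv_le_iff_one_le_mul₀ (by linarith)]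
  nlinarith

/-- **Nibble theorem.** A perfect fractional matching with small codegrees in a hypergraph with
bounded edge sizes can be rounded to an almost perfect matching of almost the same cost. -/
theorem exists_nibble (r : ℕ) {γ : ℝ} (hγ : 0 < γ) : ∃ δ : ℝ, 0 < δ ∧
    ∀ {Ω I : Type} [Fintype I] (e : I → Finset Ω) (w : I → ℝ) (X : Finset Ω),
      IsFracMatching e w X r δ → ∀ cost : I → ℝ, (∀ i, 0 ≤ cost i) → (∀ i, cost i ≤ 1) →
      ∃ M : Finset I, IsMatchingFamily e M ∧
        ∑ i ∈ M, cost i + ((X.filter fun x => ∀ i ∈ M, x ∉ e i).card : ℝ) ≤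
          ∑ i, w i * cost i + γ * X.card := by
  obtain ⟨τ, hτ0, hτ⟩ : ∃ τ : ℝ, 0 < τ ∧ Real.exp (-τ) ≤ γ / 3 := by
    have := (Real.tendsto_exp_neg_atTop_nhds_zero.eventually
      (ge_mem_nhds (show (0 : ℝ) < γ / 3 by positivity))).and (Filter.eventually_gt_atTop 0)
    obtain ⟨τ, h1, h2⟩ := this.exists
    exact ⟨τ, h2, h1⟩
  set C : ℝ := Real.exp (2 * τ) ^ r with hCdef
  have hC0 : 0 < C := by positivity
  set D : ℝ := C * 4 ^ (r + 1) + 1 with hDdef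
  have hD0 : 0 < D := by positivity
  obtain ⟨J, hJ⟩ := exists_nat_gt (τ * D / 2)
  have hJ0 : (0 : ℝ) < J := lt_trans (by positivity) hJ
  obtain ⟨η, hη0, hη1, hη2, hη3⟩ : ∃ η : ℝ, 0 < η ∧ η ≤ 1 ∧ η * 2 ≤ γ / 3 ∧
      τ * (C * (η * 2 ^ r)) ≤ γ / 3 := by
    refine ⟨min 1 (min (γ / 6) (γ / 3 / (τ * (C * 2 ^ r)))), by positivity, min_le_left _ _, ?_, ?_⟩
    · have := (min_le_right 1 (min (γ / 6) (γ / 3 / (τ * (C * 2 ^ r))))).trans (min_le_left _ _)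
      linarith
    · have := (min_le_right 1 (min (γ / 6) (γ / 3 / (τ * (C * 2 ^ r))))).trans (min_le_right _ _)
      rw [le_div_iff₀ (by positivity)] at this
      linarith
  refine ⟨η ^ 2 ^ J / 2, by positivity, ?_⟩
  intro Ω I _ e w X hF cost hcost0 hcost1
  set δ := η ^ 2 ^ J / 2 with hδdef
  have hδ0 : 0 < δ := by positivity
  obtain ⟨L, hL⟩ := exists_nat_gt (max (max (2 * τ / J) (τ / J / δ)) (τ / J * (∑ i, w i) * C))
  have hL1 : 2 * τ / J < L := ((le_max_left _ _).trans (le_max_left _ _)).trans_lt hL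
  have hL2 : τ / J / δ < L := ((le_max_right _ _).trans (le_max_left _ _)).trans_lt hL
  have hL3 : τ / J * (∑ i, w i) * C < L := (le_max_right _ _).trans_lt hL
  have hL0 : (0 : ℝ) < L := lt_trans (by positivity) hL1
  set h : ℝ := τ / J / L with hh
  have hh0 : 0 < h := by positivity
  have hh2 : h ≤ 1 / 2 := by
    rw [hh, div_le_iff₀ hL0]
    have : 2 * τ / J = 2 * (τ / J) := by ring
    linarith
  have hhδ : h ≤ δ := by
    rw [hh, div_le_iff₀ hL0]
    rw [div_lt_iff₀ hδ0] at hL2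
    linarith
  have hhN : ((J * L : ℕ) : ℝ) * h = τ := by
    rw [hh]
    push_cast
    field_simp
  have hxlow : ∀ k ≤ J * L, Real.exp (-(2 * τ)) ≤ (1 - h) ^ k := by
    intro k hk
    calc Real.exp (-(2 * τ)) ≤ Real.exp (k * (-(2 * h))) := by
          refine Real.exp_le_exp.mpr ?_
          have : (k : ℝ) * h ≤ ((J * L : ℕ) : ℝ) * h := by gcongr
          linarith
      _ = Real.exp (-(2 * h)) ^ k := by rw [← Real.exp_nat_mul]
      _ ≤ _ := by
          gcongr
          exact exp_neg_two_mul_le_one_sub hh0.le hh2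
  have hC : ∀ k ≤ J * L, (((1 - h) ^ k) ^ r)⁻¹ ≤ C := by
    intro k hk
    rw [hCdef, ← inv_pow]
    have := hxlow k hk
    rw [Real.exp_neg] at this
    exact pow_le_pow_left₀ (inv_nonneg.mpr (pow_nonneg (by linarith) _))
      (inv_le_of_inv_le₀ (Real.exp_pos _) this) r
  have hs : ∀ k < J * L, ∑ i, nibbleRate e w h k i ≤ 1 := by
    intro k hk
    calc ∑ i, nibbleRate e w h k i ≤ ∑ i, h * w i * C :=
          Finset.sum_le_sum fun i _ => hF.nibbleRate_le hh0.le (by linarith) (hC k hk.le) i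
      _ = (τ / J * (∑ i, w i) * C) / L := by
          rw [← Finset.sum_mul, ← Finset.mul_sum, hh]
          ring
      _ ≤ 1 := by
          rw [div_le_one hL0]
          exact hL3.le
  have hp : ∀ k < J * L, ∀ i, 0 ≤ nibbleRate e w h k i :=
    fun k _ i => hF.nibbleRate_nonneg k hh0.le (by linarith) i
  have herr : ∀ k ≤ J * L, ∀ A ⊆ X, |greedyExp e (nibbleRate e w h) k (freeInd e A) -
      ((1 - h) ^ k) ^ A.card| ≤ η * 2 ^ A.card := by
    intro k hk A hA
    refine hF.free_error hδ0.le hh0.le (by linarith) hhδ hC hs ?_ J hη0 hη1 (by linarith) hk hk hA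
    have : (L : ℝ) * (h * (C * 4 ^ (r + 1) + 1)) = τ * D / J := by
      rw [hh, hDdef]
      field_simp
    rw [this, div_le_iff₀ hJ0]
    linarith
  obtain ⟨M, hM, hle⟩ := exists_le_greedyExp (e := e) hp hs le_rfl
    (fun M => ∑ i ∈ M, cost i + ∑ x ∈ X, freeInd e {x} M)
  refine ⟨M, hM, ?_⟩
  rw [greedyExp_add, greedyExp_sum] at hle
  have hunc : ((X.filter fun x => ∀ i ∈ M, x ∉ e i).card : ℝ) = ∑ x ∈ X, freeInd e {x} M := by
    simp only [freeInd, IsFree, Finset.disjoint_singleton_right, Finset.sum_boole]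
  rw [hunc]
  have hc1 := hF.cost_le hh0.le (by linarith) hη0.le hC herr hcost0 le_rfl
  have hW : ∑ i, w i * cost i ≤ X.card :=
    (Finset.sum_le_sum fun i _ => mul_le_of_le_one_right (hF.nonneg i) (hcost1 i)).trans
      hF.sum_le_card
  have hW0 : 0 ≤ ∑ i, w i * cost i :=
    Finset.sum_nonneg fun i _ => mul_nonneg (hF.nonneg i) (hcost0 i)
  have hxN : (1 - h) ^ (J * L) ≤ Real.exp (-τ) := by
    calc (1 - h) ^ (J * L) ≤ Real.exp (-h) ^ (J * L) := by
          gcongr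
          · linarith
          · exact Real.one_sub_le_exp_neg h
      _ = Real.exp (-τ) := by rw [← Real.exp_nat_mul, ← hhN]; congr 1; ring
  have hxN0 : 0 ≤ (1 - h) ^ (J * L) := pow_nonneg (by linarith) _
  have hu1 : ∑ x ∈ X, greedyExp e (nibbleRate e w h) (J * L) (freeInd e {x}) ≤
      X.card * (γ / 3 + γ / 3) := by
    rw [← nsmul_eq_mul]
    refine Finset.sum_le_card_nsmul _ _ _ fun x hx => ?_
    have := (abs_le.mp (herr (J * L) le_rfl {x} (by simpa using hx))).2
    simp only [Finset.card_singleton, pow_one] at this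
    linarith
  rw [hhN] at hc1
  have hc2 : (1 - (1 - h) ^ (J * L) + τ * (C * (η * 2 ^ r))) * ∑ i, w i * cost i ≤
      ∑ i, w i * cost i + γ / 3 * X.card := by
    calc _ ≤ (1 + γ / 3) * ∑ i, w i * cost i := by
          gcongr
          linarith
      _ = ∑ i, w i * cost i + γ / 3 * ∑ i, w i * cost i := by ring
      _ ≤ _ := by gcongr
  linarith

end NibbleTheorem

/-! ### Fractional clique weightings and push-forwards -/

section FracVal

variable {U V J : Type} [Fintype U] [DecidableEq U] [Fintype V] [DecidableEq V] [Fintype J]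

/-- Fractional clique weightings whose total weight over each `t`-clique lies in `S`. Covers are
the case `S = [1, ∞)`, decompositions the case `S = {1}`. -/
def IsFracWeighting (S : Set ℝ) (t : ℕ) (G : SimpleGraph V) (f : Finset V → ℝ) : Prop :=
  (∀ K, 0 ≤ f K) ∧ (∀ K, ¬ IsCliqueOf G K → f K = 0) ∧
  ∀ T : Finset V, T.card = t → G.IsClique (T : Set V) →
    ∑ K ∈ Finset.univ.filter (fun K => T ⊆ K), f K ∈ S

/-- The minimum cost of a fractional clique weighting. -/
noncomputable def fracVal (S : Set ℝ) (t : ℕ) (G : SimpleGraph V) (c : ℕ → ℝ) : ℝ :=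
  sInf { x | ∃ f, IsFracWeighting S t G f ∧ x = cliqueCost c f }

lemma thetaFrac_eq_fracVal (t : ℕ) (G : SimpleGraph V) (c : ℕ → ℝ) :
    thetaFrac t G c = fracVal (Set.Ici 1) t G c := rfl

lemma piFrac_eq_fracVal (t : ℕ) (G : SimpleGraph V) (c : ℕ → ℝ) :
    piFrac t G c = fracVal {1} t G c := rfl

variable {S : Set ℝ} {t : ℕ} {c : ℕ → ℝ}

lemma IsFracWeighting.cost_nonneg {G : SimpleGraph V} {f : Finset V → ℝ}
    (hf : IsFracWeighting S t G f) (hc : ∀ i, 1 ≤ i → 0 ≤ c i) : 0 ≤ cliqueCost c f := by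
  refine Finset.sum_nonneg fun K _ => ?_
  by_cases hK : IsCliqueOf G K
  · exact mul_nonneg (hc _ hK.1.card_pos) (hf.1 K)
  · simp [hf.2.1 K hK]

lemma IsFracWeighting.fracVal_le {G : SimpleGraph V} {f : Finset V → ℝ}
    (hf : IsFracWeighting S t G f) (hc : ∀ i, 1 ≤ i → 0 ≤ c i) :
    fracVal S t G c ≤ cliqueCost c f :=
  csInf_le ⟨0, by rintro x ⟨g, hg, rfl⟩; exact hg.cost_nonneg hc⟩ ⟨f, hf, rfl⟩

lemma fracVal_nonneg (G : SimpleGraph V) (hc : ∀ i, 1 ≤ i → 0 ≤ c i) : 0 ≤ fracVal S t G c :=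
  Real.sInf_nonneg (by rintro x ⟨g, hg, rfl⟩; exact hg.cost_nonneg hc)

lemma isFracWeighting_single (h1 : (1 : ℝ) ∈ S) (ht : 1 ≤ t) (G : SimpleGraph V) :
    IsFracWeighting S t G (fun K => if K.card = t ∧ G.IsClique (K : Set V) then 1 else 0) := by
  refine ⟨fun K => by dsimp only; split_ifs <;> norm_num, fun K hK => if_neg fun h => hK ?_, ?_⟩
  · exact ⟨Finset.card_pos.mp (by omega), h.2⟩
  · intro T hT hTG
    rw [Finset.sum_eq_single T]
    · simpa [hT, hTG] using h1
    · intro K hK hne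
      refine if_neg fun h => hne (Finset.eq_of_subset_of_card_le ?_ ?_).symm
      · simpa using hK
      · omega
    · simp

lemma exists_cost_lt (h1 : (1 : ℝ) ∈ S) (ht : 1 ≤ t) (G : SimpleGraph V) {ε : ℝ} (hε : 0 < ε) :
    ∃ f, IsFracWeighting S t G f ∧ cliqueCost c f < fracVal S t G c + ε := by
  obtain ⟨x, ⟨f, hf, rfl⟩, hx⟩ := Real.lt_sInf_add_pos
    (s := { x | ∃ f, IsFracWeighting S t G f ∧ x = cliqueCost c f })
    ⟨_, _, isFracWeighting_single h1 ht G, rfl⟩ hε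
  exact ⟨f, hf, hx⟩

lemma fracVal_le_choose (h1 : (1 : ℝ) ∈ S) (ht : 1 ≤ t) (G : SimpleGraph V)
    (hc : ∀ i, 1 ≤ i → 0 ≤ c i) : fracVal S t G c ≤ c t * (Fintype.card V).choose t := by
  refine ((isFracWeighting_single h1 ht G).fracVal_le hc).trans ?_
  have hle : ∀ K : Finset V, c K.card * (if K.card = t ∧ G.IsClique (K : Set V) then 1 else 0) ≤
      if K ∈ Finset.powersetCard t Finset.univ then c t else 0 := by
    intro K
    by_cases hK : K.card = t
    · by_cases hG : G.IsClique (K : Set V) <;> simp [hK, hG, hc t ht]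
    · simp [hK]
  refine (Finset.sum_le_sum fun K _ => hle K).trans (le_of_eq ?_)
  rw [Finset.sum_ite_mem, Finset.univ_inter, Finset.sum_const, Finset.card_powersetCard,
    nsmul_eq_mul, mul_comm, Finset.card_univ]

/-- The pairs `(j, T')` such that `φ j` maps the `t`-set `T'` onto `T`. -/
def liftPairs (φ : J → U → V) (t : ℕ) (T : Finset V) : Finset (J × Finset U) :=
  (Finset.univ ×ˢ Finset.powersetCard t Finset.univ).filter fun p => p.2.image (φ p.1) = T

lemma mem_liftPairs {φ : J → U → V} {T : Finset V} {p : J × Finset U} :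
    p ∈ liftPairs φ t T ↔ p.2.card = t ∧ p.2.image (φ p.1) = T := by
  simp [liftPairs]

lemma injOn_of_card_image {φ : U → V} {T' : Finset U} {T : Finset V} (h : T'.image φ = T)
    (hc : T'.card = T.card) : Set.InjOn φ T' :=
  Finset.card_image_iff.mp (by rw [h, hc])

lemma injOn_of_isClique {G : SimpleGraph V} {H : SimpleGraph U} {φ : U → V}
    (hφ : ∀ u v, H.Adj u v → G.Adj (φ u) (φ v)) {K : Finset U} (hK : H.IsClique (K : Set U)) :
    Set.InjOn φ K := by
  intro a ha b hb hab
  by_contra hne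
  exact (hφ a b (hK ha hb hne)).ne hab

lemma isClique_image {G : SimpleGraph V} {H : SimpleGraph U} {φ : U → V}
    (hφ : ∀ u v, H.Adj u v → G.Adj (φ u) (φ v)) {K : Finset U} (hK : H.IsClique (K : Set U)) :
    G.IsClique ((K.image φ : Finset V) : Set V) := by
  intro a ha b hb hab
  simp only [Finset.coe_image, Set.mem_image, Finset.mem_coe] at ha hb
  obtain ⟨a, ha, rfl⟩ := ha
  obtain ⟨b, hb, rfl⟩ := hb
  exact hφ a b (hK ha hb fun h => hab (h ▸ rfl))

lemma subset_image_iff_existsUnique {φ : U → V} {K : Finset U} (hK : Set.InjOn φ K)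
    {T : Finset V} (hT : T ⊆ K.image φ) : (K.filter fun u => φ u ∈ T).image φ = T ∧
      ∀ T' ⊆ K, T'.image φ = T → T' = K.filter fun u => φ u ∈ T := by
  constructor
  · ext v
    simp only [Finset.mem_image, Finset.mem_filter]
    constructor
    · rintro ⟨u, ⟨_, hu⟩, rfl⟩
      exact hu
    · intro hv
      obtain ⟨u, hu, rfl⟩ := Finset.mem_image.mp (hT hv)
      exact ⟨u, ⟨hu, hv⟩, rfl⟩
  · rintro T' hT' rfl
    ext u
    simp only [Finset.mem_filter, Finset.mem_image]
    constructor
    · exact fun hu => ⟨hT' hu, u, hu, rfl⟩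
    · rintro ⟨hu, u', hu', h⟩
      rwa [← hK (hT' hu') hu h]

lemma ite_subset_image_eq_sum {φ : U → V} {K : Finset U} (hK : Set.InjOn φ K)
    {T : Finset V} (hT : T.card = t) (a : ℝ) :
    (if T ⊆ K.image φ then a else 0) =
      ∑ T' ∈ (Finset.powersetCard t Finset.univ).filter (fun T' : Finset U => T'.image φ = T),
        if T' ⊆ K then a else 0 := by
  split_ifs with h
  · obtain ⟨h1, h2⟩ := subset_image_iff_existsUnique hK h
    rw [Finset.sum_eq_single (K.filter fun u => φ u ∈ T)]
    · rw [if_pos (Finset.filter_subset _ _)]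
    · intro T' hT' hne
      exact if_neg fun hsub => hne (h2 T' hsub (Finset.mem_filter.mp hT').2)
    · intro hnot
      refine (hnot (Finset.mem_filter.mpr ⟨?_, h1⟩)).elim
      rw [Finset.mem_powersetCard_univ, ← hT]
      conv_rhs => rw [← h1]
      exact (Finset.card_image_of_injOn
        (hK.mono (Finset.coe_subset.mpr (Finset.filter_subset _ _)))).symm
  · refine (Finset.sum_eq_zero fun T' hT' => if_neg fun hsub => h ?_).symm
    rw [← (Finset.mem_filter.mp hT').2]
    exact Finset.image_subset_image hsub

/-- Push-forward of clique weightings along graph homomorphisms. -/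
theorem fracVal_le_of_homs (hS : Convex ℝ S) (h1 : (1 : ℝ) ∈ S) (ht : 1 ≤ t)
    (hc : ∀ i, 1 ≤ i → 0 ≤ c i) (G : SimpleGraph V) (H : J → SimpleGraph U) (φ : J → U → V)
    (hφ : ∀ j u v, (H j).Adj u v → G.Adj (φ j u) (φ j v)) {Z : ℝ} (hZ : 0 < Z)
    (hcount : ∀ T : Finset V, T.card = t → G.IsClique (T : Set V) →
      (((liftPairs φ t T).filter fun p => (H p.1).IsClique (p.2 : Set U)).card : ℝ) = Z) :
    fracVal S t G c ≤ Z⁻¹ * ∑ j, fracVal S t (H j) c := by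
  refine le_of_forall_pos_le_add fun ε hε => ?_
  have hε' : 0 < ε * Z / (Fintype.card J + 1) := by positivity
  choose f hf hcost using fun j => exists_cost_lt (c := c) h1 ht (H j) hε'
  set F : Finset V → ℝ := fun K => Z⁻¹ * ∑ j, ∑ K' : Finset U,
    if K'.image (φ j) = K then f j K' else 0 with hF
  have hinj : ∀ j K', f j K' ≠ 0 → Set.InjOn (φ j) K' ∧ IsCliqueOf G (K'.image (φ j)) := by
    intro j K' h
    have hK : IsCliqueOf (H j) K' := by
      by_contra hn
      exact h ((hf j).2.1 K' hn)
    exact ⟨injOn_of_isClique (hφ j) hK.2, hK.1.image _, isClique_image (hφ j) hK.2⟩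
  have hFW : IsFracWeighting S t G F := by
    refine ⟨fun K => mul_nonneg (inv_nonneg.mpr hZ.le) (Finset.sum_nonneg fun j _ =>
      Finset.sum_nonneg fun K' _ => ?_), fun K hK => ?_, fun T hT hTG => ?_⟩
    · split_ifs
      exacts [(hf j).1 K', le_rfl]
    · have : ∀ j K', (if K'.image (φ j) = K then f j K' else 0) = 0 := by
        intro j K'
        split_ifs with h
        · by_contra hne
          exact hK (h ▸ (hinj j K' hne).2)
        · rfl
      simp [hF, this]
    · set P := (liftPairs φ t T).filter fun p => (H p.1).IsClique (p.2 : Set U) with hP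
      have hsum : ∑ K ∈ Finset.univ.filter (fun K => T ⊆ K), F K =
          ∑ p ∈ P, Z⁻¹ • ∑ K' ∈ Finset.univ.filter (fun K' => p.2 ⊆ K'), f p.1 K' := by
        calc ∑ K ∈ Finset.univ.filter (fun K => T ⊆ K), F K
            = Z⁻¹ * ∑ j, ∑ K' : Finset U, if T ⊆ K'.image (φ j) then f j K' else 0 := by
              rw [hF, ← Finset.mul_sum, Finset.sum_comm]
              congr 1
              refine Finset.sum_congr rfl fun j _ => ?_
              rw [Finset.sum_comm]
              refine Finset.sum_congr rfl fun K' _ => ?_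
              rw [Finset.sum_ite_eq]
              simp
          _ = Z⁻¹ * ∑ j, ∑ K' : Finset U, ∑ T' ∈ (Finset.powersetCard t Finset.univ).filter
                (fun T' : Finset U => T'.image (φ j) = T), if T' ⊆ K' then f j K' else 0 := by
              congr 1
              refine Finset.sum_congr rfl fun j _ => Finset.sum_congr rfl fun K' _ => ?_
              by_cases h0 : f j K' = 0
              · simp [h0]
              · exact ite_subset_image_eq_sum (hinj j K' h0).1 hT _
          _ = Z⁻¹ * ∑ p ∈ liftPairs φ t T,
                ∑ K' ∈ Finset.univ.filter (fun K' => p.2 ⊆ K'), f p.1 K' := by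
              rw [liftPairs, Finset.sum_filter, Finset.sum_product]
              congr 1
              refine Finset.sum_congr rfl fun j _ => ?_
              rw [Finset.sum_comm, Finset.sum_filter]
              simp only [Finset.sum_filter]
          _ = Z⁻¹ * ∑ p ∈ P, ∑ K' ∈ Finset.univ.filter (fun K' => p.2 ⊆ K'), f p.1 K' := by
              congr 1
              symm
              refine Finset.sum_subset (Finset.filter_subset _ _) fun p hp hpP => ?_
              refine Finset.sum_eq_zero fun K' hK' => (hf p.1).2.1 K' fun hcl => hpP ?_
              refine Finset.mem_filter.mpr ⟨hp, hcl.2.subset ?_⟩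
              exact Finset.coe_subset.mpr (Finset.mem_filter.mp hK').2
          _ = _ := by
              rw [Finset.mul_sum]
              rfl
      rw [hsum]
      refine hS.sum_mem (fun _ _ => (inv_pos.mpr hZ).le) ?_ fun p hp => ?_
      · rw [Finset.sum_const, nsmul_eq_mul, hcount T hT hTG, mul_inv_cancel₀ hZ.ne']
      · rw [hP, Finset.mem_filter, mem_liftPairs] at hp
        exact (hf p.1).2.2 p.2 hp.1.1 hp.2
  have hFcost : cliqueCost c F = Z⁻¹ * ∑ j, cliqueCost c (f j) := by
    simp only [cliqueCost, hF]
    simp only [Finset.mul_sum]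
    rw [Finset.sum_comm]
    refine Finset.sum_congr rfl fun j _ => ?_
    rw [Finset.sum_comm]
    refine Finset.sum_congr rfl fun K' _ => ?_
    rw [Finset.sum_eq_single (K'.image (φ j))]
    · by_cases h0 : f j K' = 0
      · simp [h0]
      · rw [if_pos rfl, Finset.card_image_of_injOn (hinj j K' h0).1]
        ring
    · intro K _ hne
      rw [if_neg hne.symm]
      ring
    · simp
  calc fracVal S t G c ≤ Z⁻¹ * ∑ j, cliqueCost c (f j) := hFcost ▸ hFW.fracVal_le hc
    _ ≤ Z⁻¹ * ∑ j, (fracVal S t (H j) c + ε * Z / (Fintype.card J + 1)) := by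
        gcongr with j
        exact (hcost j).le
    _ = Z⁻¹ * ∑ j, fracVal S t (H j) c + ε * (Fintype.card J / (Fintype.card J + 1)) := by
        rw [Finset.sum_add_distrib, Finset.sum_const, Finset.card_univ, nsmul_eq_mul]
        field_simp
    _ ≤ Z⁻¹ * ∑ j, fracVal S t (H j) c + ε * 1 := by
        gcongr
        rw [div_le_one (by positivity)]
        linarith
    _ = _ := by rw [mul_one]

end FracVal

/-! ### Counting lifts in symmetric families of maps -/

section Lifts

variable {U V J : Type} [Fintype U] [DecidableEq U] [Fintype V] [DecidableEq V] [Fintype J]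
  {S : Set ℝ} {t : ℕ} {c : ℕ → ℝ}

lemma exists_perm_image_eq {T₁ T₂ : Finset V} (h : T₁.card = T₂.card) :
    ∃ τ : Equiv.Perm V, T₁.image τ = T₂ := by
  let e : {x // x ∈ T₁} ≃ {x // x ∈ T₂} := Finset.equivOfCardEq h
  refine ⟨e.extendSubtype, Finset.eq_of_subset_of_card_le ?_ ?_⟩
  · intro y hy
    obtain ⟨x, hx, rfl⟩ := Finset.mem_image.mp hy
    exact e.extendSubtype_mem x hx
  · rw [Finset.card_image_of_injective _ e.extendSubtype.injective, h]

/-- A family of maps into `V` is symmetric if it is invariant under permutations of `V`. -/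
def IsSymmFamily (φ : J → U → V) : Prop :=
  ∀ τ : Equiv.Perm V, ∃ e : Equiv.Perm J, ∀ j, φ (e j) = τ ∘ φ j

lemma IsSymmFamily.card_liftPairs_eq {φ : J → U → V} (hφ : IsSymmFamily φ) {T₁ T₂ : Finset V}
    (h : T₁.card = T₂.card) : (liftPairs φ t T₁).card = (liftPairs φ t T₂).card := by
  obtain ⟨τ, rfl⟩ := exists_perm_image_eq h
  obtain ⟨e, he⟩ := hφ τ
  refine Finset.card_bij (fun p _ => (e p.1, p.2)) ?_ ?_ ?_
  · intro p hp
    rw [mem_liftPairs] at hp ⊢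
    exact ⟨hp.1, by rw [he, ← hp.2, Finset.image_image]⟩
  · rintro ⟨j, A⟩ _ ⟨k, B⟩ _ h
    simpa using h
  · rintro ⟨j, A⟩ hp
    rw [mem_liftPairs] at hp
    refine ⟨(e.symm j, A), ?_, by simp⟩
    rw [mem_liftPairs]
    refine ⟨hp.1, Finset.image_injective τ.injective ?_⟩
    rw [Finset.image_image, ← he, e.apply_symm_apply]
    exact hp.2

/-- The pairs `(j, T')` with `T'` a `t`-set on which `φ j` is injective. -/
def injPairs (φ : J → U → V) (t : ℕ) : Finset (J × Finset U) :=
  (Finset.univ ×ˢ Finset.powersetCard t Finset.univ).filter fun p => Set.InjOn (φ p.1) p.2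

lemma IsSymmFamily.card_liftPairs_mul_choose {φ : J → U → V} (hφ : IsSymmFamily φ)
    {T : Finset V} (hT : T.card = t) :
    (liftPairs φ t T).card * (Fintype.card V).choose t = (injPairs φ t).card := by
  have hmaps : ∀ p ∈ injPairs φ t, p.2.image (φ p.1) ∈
      Finset.powersetCard t (Finset.univ : Finset V) := by
    intro p hp
    simp only [injPairs, Finset.mem_filter, Finset.mem_product, Finset.mem_univ, true_and,
      Finset.mem_powersetCard_univ] at hp
    rw [Finset.mem_powersetCard_univ, Finset.card_image_of_injOn hp.2, hp.1]
  rw [Finset.card_eq_sum_card_fiberwise hmaps]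
  have hfib : ∀ T' ∈ Finset.powersetCard t (Finset.univ : Finset V),
      ((injPairs φ t).filter fun p => p.2.image (φ p.1) = T').card = (liftPairs φ t T).card := by
    intro T' hT'
    rw [Finset.mem_powersetCard_univ] at hT'
    rw [hφ.card_liftPairs_eq (hT.trans hT'.symm)]
    congr 1
    ext p
    simp only [injPairs, Finset.mem_filter, Finset.mem_product, Finset.mem_univ, true_and,
      Finset.mem_powersetCard_univ, mem_liftPairs]
    constructor
    · exact fun h => ⟨h.1.1, h.2⟩
    · exact fun h => ⟨⟨h.1, injOn_of_card_image h.2 (h.1.trans hT'.symm)⟩, h.2⟩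
  rw [Finset.sum_congr rfl hfib, Finset.sum_const, Finset.card_powersetCard, Finset.card_univ,
    smul_eq_mul, mul_comm]

lemma isClique_comap_of_image {G : SimpleGraph V} {φ : U → V} {T' : Finset U}
    (hinj : Set.InjOn φ T') (h : G.IsClique ((T'.image φ : Finset V) : Set V)) :
    (G.comap φ).IsClique (T' : Set U) := by
  intro a ha b hb hab
  exact h (by simpa using ⟨a, ha, rfl⟩) (by simpa using ⟨b, hb, rfl⟩)
    fun h' => hab (hinj ha hb h')

/-- The fractional value relative to the number of `t`-sets of vertices. -/
noncomputable def fracDensity (S : Set ℝ) (t : ℕ) (G : SimpleGraph V) (c : ℕ → ℝ) : ℝ :=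
  fracVal S t G c / (Fintype.card V).choose t

lemma fracDensity_nonneg (G : SimpleGraph V) (hc : ∀ i, 1 ≤ i → 0 ≤ c i) :
    0 ≤ fracDensity S t G c :=
  div_nonneg (fracVal_nonneg G hc) (Nat.cast_nonneg _)

lemma fracDensity_le (h1 : (1 : ℝ) ∈ S) (ht : 1 ≤ t) (G : SimpleGraph V)
    (hc : ∀ i, 1 ≤ i → 0 ≤ c i) : fracDensity S t G c ≤ c t :=
  div_le_of_le_mul₀ (Nat.cast_nonneg _) (hc t ht) (fracVal_le_choose h1 ht G hc)

/-- The density of a graph is at most the average density over random injective restrictions. -/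
theorem fracDensity_le_average [Nonempty J] (hS : Convex ℝ S) (h1 : (1 : ℝ) ∈ S) (ht : 1 ≤ t)
    (hc : ∀ i, 1 ≤ i → 0 ≤ c i) (hU : t ≤ Fintype.card U) (G : SimpleGraph V)
    (ι : J → U → V) (hι : ∀ j, Function.Injective (ι j)) :
    fracDensity S t G c ≤ (∑ σ : Equiv.Perm V, ∑ j, fracDensity S t (G.comap (σ ∘ ι j)) c) /
      (Fintype.card (Equiv.Perm V) * Fintype.card J) := by
  let φ : Equiv.Perm V × J → U → V := fun p => p.1 ∘ ι p.2
  have hφinj : ∀ p, Function.Injective (φ p) := fun p => p.1.injective.comp (hι p.2)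
  have hsymm : IsSymmFamily φ := fun τ =>
    ⟨(Equiv.mulLeft τ).prodCongr (Equiv.refl J), fun j => rfl⟩
  have hUV : Fintype.card U ≤ Fintype.card V :=
    Fintype.card_le_of_injective _ (hι (Classical.arbitrary J))
  have hCV : (0 : ℝ) < (Fintype.card V).choose t := by
    exact_mod_cast Nat.choose_pos (hU.trans hUV)
  have hCU : (0 : ℝ) < (Fintype.card U).choose t := by
    exact_mod_cast Nat.choose_pos hU
  have hinjcard : (injPairs φ t).card =
      Fintype.card (Equiv.Perm V) * Fintype.card J * (Fintype.card U).choose t := by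
    rw [injPairs, Finset.filter_true_of_mem fun p _ => (hφinj p.1).injOn, Finset.card_product,
      Finset.card_powersetCard, Finset.card_univ, Finset.card_univ, Fintype.card_prod]
  set N : ℝ := Fintype.card (Equiv.Perm V) * Fintype.card J with hN
  have hNpos : 0 < N := by
    have h2 : 0 < Fintype.card J := Fintype.card_pos
    have h3 : 0 < Fintype.card (Equiv.Perm V) := Fintype.card_pos
    positivity
  have hcard : ∀ T : Finset V, T.card = t → ((liftPairs φ t T).card : ℝ) =
      N * (Fintype.card U).choose t / (Fintype.card V).choose t := by
    intro T hT
    rw [eq_div_iff hCV.ne', hN]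
    exact_mod_cast (hsymm.card_liftPairs_mul_choose hT).trans hinjcard
  have key := fracVal_le_of_homs (Z := N * (Fintype.card U).choose t / (Fintype.card V).choose t)
    hS h1 ht hc G (fun p => G.comap (φ p)) φ (fun j u v h => h) (by positivity) (by
      intro T hT hTG
      rw [Finset.filter_true_of_mem, hcard T hT]
      intro p hp
      rw [mem_liftPairs] at hp
      exact isClique_comap_of_image (hφinj _).injOn (hp.2 ▸ hTG))
  rw [Fintype.sum_prod_type] at key
  unfold fracDensity
  simp only [← Finset.sum_div]
  rw [div_le_iff₀ hCV]
  refine key.trans (le_of_eq ?_)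
  simp only [φ]
  field_simp

end Lifts

/-! ### Blow-ups -/

section BlowUp

variable {U V : Type} [Fintype U] [DecidableEq U] [Fintype V] [DecidableEq V]
  {S : Set ℝ} {t : ℕ} {c : ℕ → ℝ}

/-- The blow-up of `H` along `β`, with the vertices outside `W` isolated. -/
def blowUp (H : SimpleGraph U) (β : V → U) (W : Finset V) : SimpleGraph V where
  Adj v w := v ∈ W ∧ w ∈ W ∧ H.Adj (β v) (β w)
  symm := ⟨fun _ _ h => ⟨h.2.1, h.1, h.2.2.symm⟩⟩
  loopless := ⟨fun _ h => h.2.2.ne rfl⟩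

lemma card_sections {β : V → U} {W : Finset V} {m : ℕ}
    (hm : ∀ u, (W.filter fun v => β v = u).card = m) (T : Finset U) :
    ((Finset.powersetCard T.card W).filter fun T' => T'.image β = T).card = m ^ T.card := by
  have hpi : (T.pi fun u => W.filter fun v => β v = u).card = m ^ T.card := by
    rw [Finset.card_pi, Finset.prod_congr rfl fun u _ => hm u, Finset.prod_const]
  rw [← hpi]
  symm
  have hmem : ∀ f ∈ T.pi fun u => W.filter fun v => β v = u, ∀ u (hu : u ∈ T),
      f u hu ∈ W ∧ β (f u hu) = u := by
    intro f hf u hu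
    simpa using Finset.mem_pi.mp hf u hu
  have hcard : ∀ f ∈ T.pi fun u => W.filter fun v => β v = u,
      (T.attach.image fun u => f u.1 u.2).card = T.card := by
    intro f hf
    rw [Finset.card_image_of_injective, Finset.card_attach]
    intro u u' h
    apply Subtype.ext
    rw [← (hmem f hf u.1 u.2).2, ← (hmem f hf u'.1 u'.2).2]
    exact congrArg β h
  refine Finset.card_bij (fun f _ => T.attach.image fun u => f u.1 u.2) ?_ ?_ ?_
  · intro f hf
    refine Finset.mem_filter.mpr ⟨Finset.mem_powersetCard.mpr ⟨?_, hcard f hf⟩, ?_⟩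
    · intro v hv
      obtain ⟨u, _, rfl⟩ := Finset.mem_image.mp hv
      exact (hmem f hf u.1 u.2).1
    · rw [Finset.image_image]
      ext u
      simp only [Finset.mem_image, Finset.mem_attach, true_and, Function.comp_apply]
      constructor
      · rintro ⟨u', rfl⟩
        rw [(hmem f hf u'.1 u'.2).2]
        exact u'.2
      · exact fun hu => ⟨⟨u, hu⟩, (hmem f hf u hu).2⟩
  · intro f hf g hg hfg
    funext u hu
    have h1 : f u hu ∈ T.attach.image fun u => g u.1 u.2 := by
      rw [← hfg]
      exact Finset.mem_image.mpr ⟨⟨u, hu⟩, Finset.mem_attach _ _, rfl⟩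
    obtain ⟨⟨u', hu'⟩, _, h2⟩ := Finset.mem_image.mp h1
    have h3 : u' = u := by
      rw [← (hmem f hf u hu).2, ← (hmem g hg u' hu').2]
      exact congrArg β h2
    subst h3
    exact h2.symm
  · intro T' hT'
    obtain ⟨hT', himg⟩ := Finset.mem_filter.mp hT'
    obtain ⟨hW, hc'⟩ := Finset.mem_powersetCard.mp hT'
    have hex : ∀ u (_ : u ∈ T), ∃ v ∈ T', β v = u := by
      intro u hu
      rw [← himg] at hu
      simpa using hu
    choose f hfT hfβ using hex
    have hf : f ∈ T.pi fun u => W.filter fun v => β v = u := by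
      refine Finset.mem_pi.mpr fun u hu => Finset.mem_filter.mpr ⟨hW (hfT u hu), hfβ u hu⟩
    refine ⟨f, hf, Finset.eq_of_subset_of_card_le ?_ ?_⟩
    · intro v hv
      obtain ⟨u, _, rfl⟩ := Finset.mem_image.mp hv
      exact hfT u.1 u.2
    · rw [hcard f hf, hc']

theorem fracVal_blowUp_ge (hS : Convex ℝ S) (h1 : (1 : ℝ) ∈ S) (ht : 2 ≤ t)
    (hc : ∀ i, 1 ≤ i → 0 ≤ c i) (H : SimpleGraph U) {β : V → U} {W : Finset V} {m : ℕ}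
    (hmpos : 0 < m) (hm : ∀ u, (W.filter fun v => β v = u).card = m) :
    (m : ℝ) ^ t * fracVal S t H c ≤ fracVal S t (blowUp H β W) c := by
  have hmR : (0 : ℝ) < m := by exact_mod_cast hmpos
  have key := fracVal_le_of_homs (J := Unit) (t := t) (Z := (m : ℝ) ^ t) hS h1 (by omega) hc H
    (fun _ => blowUp H β W) (fun _ => β) (fun _ u v h => h.2.2) (by positivity) (by
      intro T hT hTH
      have := card_sections hm T
      rw [hT] at this
      rw [← Nat.cast_pow, Nat.cast_inj, ← this]
      refine Finset.card_bij (fun p _ => p.2) ?_ ?_ ?_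
      · intro p hp
        rw [Finset.mem_filter, mem_liftPairs] at hp
        obtain ⟨⟨hpc, himg⟩, hcl⟩ := hp
        refine Finset.mem_filter.mpr ⟨Finset.mem_powersetCard.mpr ⟨fun v hv => ?_, hpc⟩, himg⟩
        obtain ⟨w, hw, hne⟩ := Finset.exists_mem_ne (by omega : 1 < p.2.card) v
        exact (hcl hw hv hne).2.1
      · rintro ⟨_, A⟩ _ ⟨_, B⟩ _ h
        exact Prod.ext rfl h
      · intro A hA
        obtain ⟨hA, himg⟩ := Finset.mem_filter.mp hA
        obtain ⟨hW, hAc⟩ := Finset.mem_powersetCard.mp hA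
        refine ⟨((), A), ?_, rfl⟩
        rw [Finset.mem_filter, mem_liftPairs]
        refine ⟨⟨hAc, himg⟩, fun a ha b hb hab => ⟨hW ha, hW hb, ?_⟩⟩
        refine hTH ?_ ?_ fun h => hab (injOn_of_card_image himg (hAc.trans hT.symm) ha hb h)
        · rw [← himg]; exact Finset.mem_coe.mpr (Finset.mem_image_of_mem β ha)
        · rw [← himg]; exact Finset.mem_coe.mpr (Finset.mem_image_of_mem β hb))
  simp only [Finset.univ_unique, Finset.sum_singleton] at key
  rwa [← div_eq_inv_mul, le_div_iff₀' (by positivity)] at key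

end BlowUp

lemma card_residue_fibre {s n : ℕ} (hs : 0 < s) (u : Fin s) :
    ((Finset.univ.filter fun v : Fin n => v.1 < s * (n / s)).filter
      fun v => (⟨v.1 % s, Nat.mod_lt _ hs⟩ : Fin s) = u).card = n / s := by
  conv_rhs => rw [← Finset.card_range (n / s)]
  symm
  have hlt : ∀ k < n / s, u.1 + s * k < s * (n / s) := by
    intro k hk
    calc u.1 + s * k < s + s * k := by have := u.2; omega
      _ = s * (k + 1) := by ring
      _ ≤ s * (n / s) := Nat.mul_le_mul_left _ hk
  have hle : s * (n / s) ≤ n := Nat.mul_div_le n s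
  refine Finset.card_bij (fun k hk => ⟨u.1 + s * k,
    (hlt k (Finset.mem_range.mp hk)).trans_le hle⟩) ?_ ?_ ?_
  · intro k hk
    simp only [Finset.mem_filter, Finset.mem_univ, true_and]
    refine ⟨hlt k (Finset.mem_range.mp hk), Fin.ext ?_⟩
    simp [Nat.mod_eq_of_lt u.2]
  · intro k _ k' _ h
    simp only [Fin.mk.injEq, Nat.add_left_cancel_iff] at h
    exact Nat.eq_of_mul_eq_mul_left hs h
  · intro v hv
    simp only [Finset.mem_filter, Finset.mem_univ, true_and] at hv
    refine ⟨v.1 / s, Finset.mem_range.mpr (Nat.div_lt_of_lt_mul hv.1), Fin.ext ?_⟩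
    have h2 : v.1 % s = u.1 := congrArg Fin.val hv.2
    simp only
    rw [← h2, Nat.mod_add_div]

lemma pow_mul_choose_ge {t s n : ℕ} {γ : ℝ} (ht : 1 ≤ t) (hγ : 0 < γ) (hγ1 : γ ≤ 1)
    (hs : 2 * (t : ℝ) * t ≤ γ * s) (hn : 2 * (t : ℝ) * s ≤ γ * n) :
    (1 - γ) * ((n : ℝ) ^ t / t.factorial) ≤ ((n / s : ℕ) : ℝ) ^ t * s.choose t := by
  have htR : (1 : ℝ) ≤ t := by exact_mod_cast ht
  have hs0 : (0 : ℝ) < s := by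
    by_contra h
    have : γ * (s : ℝ) ≤ 0 := mul_nonpos_of_nonneg_of_nonpos hγ.le (not_lt.mp h)
    nlinarith
  have hts : (t : ℝ) ≤ s := by nlinarith
  have hn0 : (0 : ℝ) < n := by
    by_contra h
    have : γ * (n : ℝ) ≤ 0 := mul_nonpos_of_nonneg_of_nonpos hγ.le (not_lt.mp h)
    nlinarith
  have hsn : (s : ℝ) ≤ n := by nlinarith
  have hfac : (0 : ℝ) < t.factorial := by exact_mod_cast t.factorial_pos
  have hm : ((n : ℝ) - s) / s ≤ ((n / s : ℕ) : ℝ) := by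
    rw [div_le_iff₀ hs0]
    have h1 : n < n / s * s + s := by
      have := Nat.lt_div_mul_add (a := n) (b := s) (by exact_mod_cast hs0)
      omega
    have h2 : (n : ℝ) < ((n / s : ℕ) : ℝ) * s + s := by exact_mod_cast h1
    linarith
  have hchoose : ((s : ℝ) - t) ^ t ≤ s.choose t * t.factorial := by
    have h1 : (s + 1 - t) ^ t ≤ s.descFactorial t := Nat.pow_sub_le_descFactorial s t
    rw [Nat.descFactorial_eq_factorial_mul_choose, mul_comm] at h1
    have h2 : (((s + 1 - t : ℕ) : ℝ)) ^ t ≤ s.choose t * t.factorial := by exact_mod_cast h1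
    refine (pow_le_pow_left₀ (by linarith) ?_ t).trans h2
    have hts' : t ≤ s := by exact_mod_cast hts
    rw [Nat.cast_sub (by omega)]
    push_cast
    linarith
  set x : ℝ := s / n + t / s with hx
  have hx1 : t * x ≤ γ := by
    have e1 : (t : ℝ) * (s / n) ≤ γ / 2 := by
      rw [← mul_div_assoc, div_le_iff₀ hn0]
      linarith
    have e2 : (t : ℝ) * (t / s) ≤ γ / 2 := by
      rw [← mul_div_assoc, div_le_iff₀ hs0]
      linarith
    rw [hx, mul_add]
    linarith
  have hx0 : 0 ≤ x := by positivity
  have hxle : x ≤ 1 := by nlinarith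
  have hbern : 1 - γ ≤ (1 - x) ^ t := by
    have := one_add_mul_le_pow (a := -x) (by linarith) t
    rw [← sub_eq_add_neg] at this
    linarith
  rw [mul_div_assoc', div_le_iff₀ hfac]
  calc (1 - γ) * (n : ℝ) ^ t ≤ (1 - x) ^ t * (n : ℝ) ^ t := by gcongr
    _ = ((1 - x) * n) ^ t := (mul_pow _ _ _).symm
    _ ≤ (((n : ℝ) - s) / s * (s - t)) ^ t := by
        refine pow_le_pow_left₀ (mul_nonneg (by linarith) hn0.le) ?_ t
        have e : ((n : ℝ) - s) / s * (s - t) = (1 - x) * n + t := by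
          rw [hx]
          field_simp
          ring
        rw [e]
        linarith
    _ ≤ (((n / s : ℕ) : ℝ) * (s - t)) ^ t := by
        refine pow_le_pow_left₀ ?_ ?_ t
        · exact mul_nonneg (div_nonneg (by linarith) hs0.le) (by linarith)
        · exact mul_le_mul_of_nonneg_right hm (by linarith)
    _ = ((n / s : ℕ) : ℝ) ^ t * (s - t) ^ t := mul_pow _ _ _
    _ ≤ ((n / s : ℕ) : ℝ) ^ t * (s.choose t * t.factorial) := by gcongr
    _ = _ := by ring

/-- Every graph on `s` vertices has a blow-up on `n` vertices of almost the same density. -/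
theorem exists_blowUp {t s n : ℕ} {c : ℕ → ℝ} {γ : ℝ} (ht : 2 ≤ t)
    (hc : ∀ i, 1 ≤ i → 0 ≤ c i) (hγ : 0 < γ) (hγ1 : γ ≤ 1)
    (hs : 2 * (t : ℝ) * t ≤ γ * s) (hn : 2 * (t : ℝ) * s ≤ γ * n) (H : SimpleGraph (Fin s)) :
    ∃ Gt : SimpleGraph (Fin n), ∀ S : Set ℝ, Convex ℝ S → 1 ∈ S →
      (1 - γ) * (n : ℝ) ^ t * (fracDensity S t H c / t.factorial) ≤ fracVal S t Gt c := by
  have htR : (2 : ℝ) ≤ t := by exact_mod_cast ht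
  have hts : (t : ℝ) ≤ s := by nlinarith
  have hsn : (s : ℝ) ≤ n := by nlinarith
  have hs0 : 0 < s := by
    have : (0 : ℝ) < s := by linarith
    exact_mod_cast this
  have hm : 0 < n / s := Nat.div_pos (by exact_mod_cast hsn) hs0
  refine ⟨blowUp H _ _, fun S hS h1 => le_trans ?_
    (fracVal_blowUp_ge hS h1 ht hc H hm (card_residue_fibre hs0))⟩
  have hC : (0 : ℝ) < s.choose t := by
    exact_mod_cast Nat.choose_pos (by exact_mod_cast hts)
  have hval : fracVal S t H c = fracDensity S t H c * s.choose t := by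
    rw [fracDensity, Fintype.card_fin, div_mul_cancel₀ _ hC.ne']
  have h := mul_le_mul_of_nonneg_right (pow_mul_choose_ge (by omega) hγ hγ1 hs hn)
    (fracDensity_nonneg (S := S) (t := t) H hc)
  rw [hval]
  calc _ = (1 - γ) * ((n : ℝ) ^ t / t.factorial) * fracDensity S t H c := by ring
    _ ≤ _ := h
    _ = _ := by ring

/-! ### Concentration of averages over blocks -/

section Concentration

lemma sum_sq_sum_le {Ψ : Type} [Fintype Ψ] {y : Ψ → ℝ} {C : ℝ} (hy0 : ∑ a, y a = 0)
    (hyC : ∀ a, y a ^ 2 ≤ C) (m : ℕ) :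
    ∑ Φ : Fin m → Ψ, (∑ j, y (Φ j)) ^ 2 ≤ m * C * Fintype.card (Fin m → Ψ) := by
  induction m with
  | zero => simp
  | succ m ih =>
    have hexp : ∑ Φ : Fin (m + 1) → Ψ, (∑ j, y (Φ j)) ^ 2 =
        ∑ a, ∑ Φ : Fin m → Ψ, (y a + ∑ j, y (Φ j)) ^ 2 := by
      rw [← Fintype.sum_prod_type']
      refine (Fintype.sum_equiv (Fin.consEquiv fun _ => Ψ) _ _ fun p => ?_).symm
      rw [Fin.sum_univ_succ]
      simp [Fin.consEquiv]
    have hsplit : ∑ a, ∑ Φ : Fin m → Ψ, (y a + ∑ j, y (Φ j)) ^ 2 =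
        Fintype.card (Fin m → Ψ) * ∑ a, y a ^ 2 +
          Fintype.card Ψ * ∑ Φ : Fin m → Ψ, (∑ j, y (Φ j)) ^ 2 := by
      have h1 : ∀ a, ∑ Φ : Fin m → Ψ, (y a + ∑ j, y (Φ j)) ^ 2 =
          Fintype.card (Fin m → Ψ) * y a ^ 2 + y a * (2 * ∑ Φ : Fin m → Ψ, ∑ j, y (Φ j)) +
            ∑ Φ : Fin m → Ψ, (∑ j, y (Φ j)) ^ 2 := by
        intro a
        simp only [add_sq, Finset.sum_add_distrib, Finset.sum_const, Finset.card_univ,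
          nsmul_eq_mul, ← Finset.mul_sum]
        ring
      simp only [h1, Finset.sum_add_distrib, ← Finset.mul_sum, ← Finset.sum_mul, hy0,
        Finset.sum_const, Finset.card_univ, nsmul_eq_mul]
      ring
    rw [hexp, hsplit]
    have hy2 : ∑ a, y a ^ 2 ≤ Fintype.card Ψ * C := by
      refine (Finset.sum_le_sum fun a _ => hyC a).trans (le_of_eq ?_)
      rw [Finset.sum_const, Finset.card_univ, nsmul_eq_mul]
    calc _ ≤ (Fintype.card (Fin m → Ψ) : ℝ) * (Fintype.card Ψ * C) +
          Fintype.card Ψ * (m * C * Fintype.card (Fin m → Ψ)) := by gcongr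
      _ = _ := by
        simp only [Fintype.card_fun, Fintype.card_fin]
        push_cast
        ring

lemma sum_eval_eq {ι Ψ : Type} [Fintype ι] [DecidableEq ι] [Fintype Ψ] [Nonempty Ψ] (x : Ψ → ℝ)
    (j : ι) : ∑ Φ : ι → Ψ, x (Φ j) =
      (∑ ψ, x ψ) / Fintype.card Ψ * Fintype.card (ι → Ψ) := by
  have hΨ : (Fintype.card Ψ : ℝ) ≠ 0 := by exact_mod_cast Fintype.card_ne_zero
  rw [Fintype.card_congr (Equiv.funSplitAt j Ψ), Fintype.card_prod,
    Fintype.sum_equiv (Equiv.funSplitAt j Ψ) (fun Φ => x (Φ j)) (fun p => x p.1) fun Φ => rfl,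
    Fintype.sum_prod_type]
  simp only [Finset.sum_const, Finset.card_univ, nsmul_eq_mul, ← Finset.mul_sum]
  push_cast
  field_simp

/-- The average of a bounded function over independent blocks is close to its mean. -/
lemma sum_abs_blockAverage_sub_le {Ψ : Type} [Fintype Ψ] [Nonempty Ψ] {x : Ψ → ℝ} {C η a : ℝ}
    (hx0 : ∀ ψ, 0 ≤ x ψ) (hxC : ∀ ψ, x ψ ≤ C) (ha : a = (∑ ψ, x ψ) / Fintype.card Ψ)
    (hη : 0 < η) {m : ℕ} (hm : 0 < m) :
    ∑ Φ : Fin m → Ψ, |(∑ j, x (Φ j)) / m - a| ≤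
      (η + C ^ 2 / (m * η)) * Fintype.card (Fin m → Ψ) := by
  have hcard : (0 : ℝ) < Fintype.card Ψ := by exact_mod_cast Fintype.card_pos
  have hmR : (0 : ℝ) < m := by exact_mod_cast hm
  have haC : a ≤ C := by
    rw [ha, div_le_iff₀ hcard]
    refine (Finset.sum_le_sum fun ψ _ => hxC ψ).trans (le_of_eq ?_)
    rw [Finset.sum_const, Finset.card_univ, nsmul_eq_mul, mul_comm]
  have ha0 : 0 ≤ a := by
    rw [ha]
    exact div_nonneg (Finset.sum_nonneg fun ψ _ => hx0 ψ) hcard.le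
  have hvar := sum_sq_sum_le (y := fun ψ => x ψ - a) (C := C ^ 2) (by
      rw [Finset.sum_sub_distrib, Finset.sum_const, Finset.card_univ, nsmul_eq_mul, ha]
      field_simp
      ring) (fun ψ => by
      have := hx0 ψ
      have := hxC ψ
      exact sq_le_sq' (by linarith) (by linarith)) m
  have hpt : ∀ Φ : Fin m → Ψ, |(∑ j, x (Φ j)) / m - a| ≤
      η + (∑ j, (x (Φ j) - a)) ^ 2 / (m ^ 2 * η) := by
    intro Φ
    have e : (∑ j, x (Φ j)) / m - a = (∑ j, (x (Φ j) - a)) / m := by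
      rw [Finset.sum_sub_distrib, Finset.sum_const, Finset.card_univ, nsmul_eq_mul,
        Fintype.card_fin]
      field_simp
    rw [e, ← div_div, ← div_pow]
    set z := (∑ j, (x (Φ j) - a)) / m
    rw [← sub_le_iff_le_add', le_div_iff₀ hη]
    nlinarith [sq_abs z, sq_nonneg (|z| - η), abs_nonneg z]
  calc _ ≤ ∑ Φ : Fin m → Ψ, (η + (∑ j, (x (Φ j) - a)) ^ 2 / (m ^ 2 * η)) :=
        Finset.sum_le_sum fun Φ _ => hpt Φ
    _ = Fintype.card (Fin m → Ψ) * η +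
        (∑ Φ : Fin m → Ψ, (∑ j, (x (Φ j) - a)) ^ 2) / (m ^ 2 * η) := by
        rw [Finset.sum_add_distrib, Finset.sum_const, Finset.card_univ, nsmul_eq_mul,
          Finset.sum_div]
    _ ≤ Fintype.card (Fin m → Ψ) * η +
        (m * C ^ 2 * Fintype.card (Fin m → Ψ)) / (m ^ 2 * η) := by gcongr
    _ = _ := by
        field_simp

/-- A function dominated by averages of rearrangements of `B`, where `B` is concentrated around
`a`, lies only rarely far below its own mean, provided that mean is close to `a`. -/
lemma sum_posPart_le {Ω P : Type} [Fintype Ω] [Nonempty Ω] [Fintype P] [Nonempty P]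
    {act : P → Equiv.Perm Ω} {x B : Ω → ℝ} {a a' : ℝ}
    (hxB : ∀ ω, x ω ≤ (∑ p, B (act p ω)) / Fintype.card P)
    (ha' : a' = (∑ ω, x ω) / Fintype.card Ω) (ha : a = (∑ ω, B ω) / Fintype.card Ω) :
    a' ≤ a ∧ ∑ ω, max (a' - x ω) 0 ≤ (a - a') * Fintype.card Ω + ∑ ω, |B ω - a| := by
  have hP : (0 : ℝ) < Fintype.card P := by exact_mod_cast Fintype.card_pos
  have hΩ : (0 : ℝ) < Fintype.card Ω := by exact_mod_cast Fintype.card_pos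
  have havg : ∀ F : Ω → ℝ, ∑ ω, (∑ p, F (act p ω)) / Fintype.card P = ∑ ω, F ω := by
    intro F
    rw [← Finset.sum_div, Finset.sum_comm, div_eq_iff hP.ne']
    rw [Finset.sum_congr rfl fun p _ => Equiv.sum_comp (act p) F, Finset.sum_const,
      Finset.card_univ, nsmul_eq_mul, mul_comm]
  have haa : a' ≤ a := by
    rw [ha, ha', ← havg B]
    gcongr with ω
    exact hxB ω
  refine ⟨haa, ?_⟩
  have hflip : ∑ ω, max (a' - x ω) 0 = ∑ ω, max (x ω - a') 0 := by
    rw [← sub_eq_zero, ← Finset.sum_sub_distrib]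
    have e : ∀ ω, max (a' - x ω) 0 - max (x ω - a') 0 = a' - x ω := by
      intro ω
      rcases le_total a' (x ω) with h | h
      · rw [max_eq_right (by linarith), max_eq_left (by linarith)]
        ring
      · rw [max_eq_left (by linarith), max_eq_right (by linarith)]
        ring
    rw [Finset.sum_congr rfl fun ω _ => e ω, Finset.sum_sub_distrib, Finset.sum_const,
      Finset.card_univ, nsmul_eq_mul, ha']
    field_simp
    ring
  rw [hflip]
  calc ∑ ω, max (x ω - a') 0
      ≤ ∑ ω, (∑ p, max (B (act p ω) - a') 0) / Fintype.card P := by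
        refine Finset.sum_le_sum fun ω _ => max_le ?_ ?_
        · rw [le_div_iff₀ hP]
          have h1 := hxB ω
          rw [le_div_iff₀ hP] at h1
          calc (x ω - a') * Fintype.card P ≤ ∑ p, (B (act p ω) - a') := by
                rw [Finset.sum_sub_distrib, Finset.sum_const, Finset.card_univ, nsmul_eq_mul]
                linarith
            _ ≤ _ := Finset.sum_le_sum fun p _ => le_max_left _ _
        · exact div_nonneg (Finset.sum_nonneg fun p _ => le_max_right _ _) hP.le
    _ = ∑ ω, max (B ω - a') 0 := havg fun ω => max (B ω - a') 0
    _ ≤ ∑ ω, ((a - a') + |B ω - a|) := by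
        refine Finset.sum_le_sum fun ω _ => max_le ?_ ?_
        · linarith [le_abs_self (B ω - a)]
        · linarith [abs_nonneg (B ω - a)]
    _ = _ := by
        rw [Finset.sum_add_distrib, Finset.sum_const, Finset.card_univ, nsmul_eq_mul, mul_comm]

end Concentration

section AverageDensity

variable {V : Type} [Fintype V] [DecidableEq V] {S : Set ℝ} {t : ℕ} {c : ℕ → ℝ}

/-- The mean density of the pullback of `G` along a uniformly random map `Fin s → V`. -/
noncomputable def avgDensity (S : Set ℝ) (t : ℕ) (c : ℕ → ℝ) (G : SimpleGraph V) (s : ℕ) : ℝ :=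
  (∑ ψ : Fin s → V, fracDensity S t (G.comap ψ) c) / Fintype.card (Fin s → V)

lemma avgDensity_nonneg (G : SimpleGraph V) (hc : ∀ i, 1 ≤ i → 0 ≤ c i) (s : ℕ) :
    0 ≤ avgDensity S t c G s :=
  div_nonneg (Finset.sum_nonneg fun _ _ => fracDensity_nonneg _ hc) (Nat.cast_nonneg _)

lemma avgDensity_le (h1 : (1 : ℝ) ∈ S) (ht : 1 ≤ t) (G : SimpleGraph V)
    (hc : ∀ i, 1 ≤ i → 0 ≤ c i) (s : ℕ) : avgDensity S t c G s ≤ c t := by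
  refine div_le_of_le_mul₀ (Nat.cast_nonneg _) (hc t ht) ?_
  refine (Finset.sum_le_sum fun ψ _ => fracDensity_le h1 ht _ hc).trans (le_of_eq ?_)
  rw [Finset.sum_const, Finset.card_univ, nsmul_eq_mul, mul_comm]

/-- Splitting a map on `m * s` points into `m` blocks of `s` points. -/
def blockEquiv (V : Type) (m s : ℕ) : (Fin (m * s) → V) ≃ (Fin m → Fin s → V) :=
  (Equiv.arrowCongr finProdFinEquiv.symm (Equiv.refl V)).trans (Equiv.curry _ _ _)

theorem avgDensity_concentration [Nonempty V] (hS : Convex ℝ S) (h1 : (1 : ℝ) ∈ S) (ht : 1 ≤ t)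
    (hc : ∀ i, 1 ≤ i → 0 ≤ c i) {m s : ℕ} (hs : t ≤ s) (hm : 0 < m) (G : SimpleGraph V)
    {η : ℝ} (hη : 0 < η) :
    avgDensity S t c G (m * s) ≤ avgDensity S t c G s ∧
    ∑ ψ : Fin (m * s) → V, max (avgDensity S t c G (m * s) - fracDensity S t (G.comap ψ) c) 0 ≤
      (avgDensity S t c G s - avgDensity S t c G (m * s) + (η + c t ^ 2 / (m * η))) *
        Fintype.card (Fin (m * s) → V) := by
  have hmR : (0 : ℝ) < m := by exact_mod_cast hm
  have : Nonempty (Fin m) := ⟨⟨0, hm⟩⟩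
  set x : (Fin s → V) → ℝ := fun ψ => fracDensity S t (G.comap ψ) c with hx
  have hconc := sum_abs_blockAverage_sub_le (x := x) (C := c t) (η := η)
    (a := avgDensity S t c G s) (fun ψ => fracDensity_nonneg _ hc)
    (fun ψ => fracDensity_le h1 ht _ hc) rfl hη hm
  set B : (Fin (m * s) → V) → ℝ := fun ψ => (∑ j, x (blockEquiv V m s ψ j)) / m with hB
  have hcardeq : (Fintype.card (Fin (m * s) → V) : ℝ) = Fintype.card (Fin m → Fin s → V) := by
    exact_mod_cast Fintype.card_congr (blockEquiv V m s)
  have hBabs : ∑ ψ, |B ψ - avgDensity S t c G s| ≤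
      (η + c t ^ 2 / (m * η)) * Fintype.card (Fin (m * s) → V) := by
    rw [hcardeq]
    refine le_trans (le_of_eq ?_) hconc
    exact Equiv.sum_comp (blockEquiv V m s)
      fun Φ => |(∑ j, x (Φ j)) / m - avgDensity S t c G s|
  have hΨ : (0 : ℝ) < Fintype.card (Fin s → V) := by exact_mod_cast Fintype.card_pos
  have hBavg : avgDensity S t c G s = (∑ ψ, B ψ) / Fintype.card (Fin (m * s) → V) := by
    have e1 : ∑ ψ, B ψ = ∑ Φ : Fin m → Fin s → V, (∑ j, x (Φ j)) / m :=
      Equiv.sum_comp (blockEquiv V m s) fun Φ => (∑ j, x (Φ j)) / m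
    have e2 : ∑ j, ∑ Φ : Fin m → Fin s → V, x (Φ j) =
        m * (avgDensity S t c G s * Fintype.card (Fin m → Fin s → V)) := by
      rw [Finset.sum_congr rfl fun j _ => sum_eval_eq x j, Finset.sum_const, Finset.card_univ,
        nsmul_eq_mul, Fintype.card_fin]
      rfl
    rw [e1, hcardeq, ← Finset.sum_div, Finset.sum_comm, e2, mul_div_cancel_left₀ _ hmR.ne',
      mul_div_cancel_right₀]
    exact_mod_cast Fintype.card_ne_zero
  have hact := sum_posPart_le (P := Equiv.Perm (Fin (m * s)))
    (act := fun σ => Equiv.arrowCongr σ.symm (Equiv.refl V))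
    (x := fun ψ : Fin (m * s) → V => fracDensity S t (G.comap ψ) c) (B := B)
    (a := avgDensity S t c G s) (a' := avgDensity S t c G (m * s)) (by
      intro ψ
      have h := fracDensity_le_average (J := Fin m) hS h1 ht hc (U := Fin s) (by simpa using hs)
        (G.comap ψ) (fun j i => finProdFinEquiv (j, i)) (fun j i i' h => by simpa using h)
      refine h.trans (le_of_eq ?_)
      rw [div_mul_eq_div_div_swap, Fintype.card_fin, Finset.sum_div]
      rfl) rfl hBavg
  refine ⟨hact.1, hact.2.trans ?_⟩
  rw [add_mul]
  gcongr

/-- At one of boundedly many scales, some pullback has both densities close to their means. -/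
theorem exists_good_map [Nonempty V] {S₁ S₂ : Set ℝ} (hS₁ : Convex ℝ S₁) (h₁ : (1 : ℝ) ∈ S₁)
    (hS₂ : Convex ℝ S₂) (h₂ : (1 : ℝ) ∈ S₂) (ht : 1 ≤ t) (hc : ∀ i, 1 ≤ i → 0 ≤ c i)
    {s₀ m R : ℕ} (hs : t ≤ s₀) (hm : 0 < m) (hR : 0 < R) {η ε : ℝ} (hη : 0 < η)
    (hε : 2 * c t / R + 2 * (η + c t ^ 2 / (m * η)) ≤ ε) (G : SimpleGraph V) :
    ∃ j < R, ∃ ψ : Fin (m * (m ^ j * s₀)) → V,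
      avgDensity S₁ t c G (m * (m ^ j * s₀)) - ε ≤ fracDensity S₁ t (G.comap ψ) c ∧
      avgDensity S₂ t c G (m * (m ^ j * s₀)) - ε ≤ fracDensity S₂ t (G.comap ψ) c := by
  have hRR : (0 : ℝ) < R := by exact_mod_cast hR
  set u : ℕ → ℝ := fun j => avgDensity S₁ t c G (m ^ j * s₀) + avgDensity S₂ t c G (m ^ j * s₀)
    with hu
  have hdrop : ∃ j ∈ Finset.range R, u j - u (j + 1) ≤ 2 * c t / R := by
    refine Finset.exists_le_of_sum_le (Finset.nonempty_range_iff.mpr hR.ne') ?_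
    rw [Finset.sum_range_sub', Finset.sum_const, Finset.card_range, nsmul_eq_mul,
      mul_div_cancel₀ _ hRR.ne']
    have e1 := avgDensity_le h₁ ht G hc (m ^ 0 * s₀)
    have e2 := avgDensity_le h₂ ht G hc (m ^ 0 * s₀)
    have e3 := avgDensity_nonneg (S := S₁) (t := t) G hc (m ^ R * s₀)
    have e4 := avgDensity_nonneg (S := S₂) (t := t) G hc (m ^ R * s₀)
    simp only [hu]
    linarith
  obtain ⟨j, hj, hdrop⟩ := hdrop
  refine ⟨j, Finset.mem_range.mp hj, ?_⟩
  simp only [hu, pow_succ', mul_assoc] at hdrop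
  have hsj : t ≤ m ^ j * s₀ := hs.trans (Nat.le_mul_of_pos_left _ (pow_pos hm j))
  obtain ⟨_, b1⟩ := avgDensity_concentration hS₁ h₁ ht hc hsj hm G hη
  obtain ⟨_, b2⟩ := avgDensity_concentration hS₂ h₂ ht hc hsj hm G hη
  set s' := m * (m ^ j * s₀)
  have hex : ∃ ψ ∈ (Finset.univ : Finset (Fin s' → V)),
      max (avgDensity S₁ t c G s' - fracDensity S₁ t (G.comap ψ) c) 0 +
        max (avgDensity S₂ t c G s' - fracDensity S₂ t (G.comap ψ) c) 0 ≤ ε := by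
    refine Finset.exists_le_of_sum_le Finset.univ_nonempty ?_
    rw [Finset.sum_add_distrib, Finset.sum_const, Finset.card_univ, nsmul_eq_mul]
    refine (add_le_add b1 b2).trans ?_
    rw [← add_mul, mul_comm]
    gcongr
    linarith
  obtain ⟨ψ, _, hψ⟩ := hex
  refine ⟨ψ, ?_, ?_⟩
  · linarith [le_max_left (avgDensity S₁ t c G s' - fracDensity S₁ t (G.comap ψ) c) 0,
      le_max_right (avgDensity S₂ t c G s' - fracDensity S₂ t (G.comap ψ) c) 0]
  · linarith [le_max_right (avgDensity S₁ t c G s' - fracDensity S₁ t (G.comap ψ) c) 0,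
      le_max_left (avgDensity S₂ t c G s' - fracDensity S₂ t (G.comap ψ) c) 0]

end AverageDensity

/-! ### Thinning fractional weightings -/

section Thinning

lemma sum_powerset_prod_mul_prod_of_mem {ι : Type} [DecidableEq ι] (p : ι → ℝ) {P : Finset ι}
    {a : ι} (ha : a ∈ P) :
    ∑ E ∈ P.powerset, (if a ∈ E then (∏ i ∈ E, p i) * ∏ i ∈ P \ E, (1 - p i) else 0) = p a := by
  have h := Finset.prod_add p (fun i => if i = a then 0 else 1 - p i) P
  have hprod : ∏ i ∈ P, (p i + if i = a then 0 else 1 - p i) = p a := by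
    rw [Finset.prod_eq_single a]
    · simp
    · intro b _ hb
      simp [hb]
    · exact fun h => absurd ha h
  rw [← hprod, h]
  refine Finset.sum_congr rfl fun E hE => ?_
  split_ifs with haE
  · congr 1
    refine Finset.prod_congr rfl fun i hi => ?_
    have : i ≠ a := by
      rintro rfl
      exact (Finset.mem_sdiff.mp hi).2 haE
    simp [this]
  · rw [Finset.prod_eq_zero (i := a) (Finset.mem_sdiff.mpr ⟨ha, haE⟩) (by simp), mul_zero]

lemma sum_powerset_prod_mul_prod {ι : Type} [DecidableEq ι] (p : ι → ℝ) (P : Finset ι) :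
    ∑ E ∈ P.powerset, (∏ i ∈ E, p i) * ∏ i ∈ P \ E, (1 - p i) = 1 := by
  rw [← Finset.prod_add]
  simp

variable {U : Type} [Fintype U] [DecidableEq U] {t : ℕ} {c : ℕ → ℝ}

/-- A weighting of pairs `(K, E)`, where `E` is a nonempty set of `t`-subsets of the clique `K`
that `K` is responsible for, giving total weight one to each `t`-clique. -/
structure IsThinned (t : ℕ) (H : SimpleGraph U)
    (g : Finset U × Finset (Finset U) → ℝ) : Prop where
  nonneg : ∀ p, 0 ≤ g p
  isClique : ∀ p, g p ≠ 0 → IsCliqueOf H p.1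
  nonempty : ∀ p, g p ≠ 0 → p.2.Nonempty
  subset : ∀ p, g p ≠ 0 → p.2 ⊆ Finset.powersetCard t p.1
  degree : ∀ T : Finset U, T.card = t → H.IsClique (T : Set U) →
    ∑ p, (if T ∈ p.2 then g p else 0) = 1

theorem exists_isThinned_cover (ht : 1 ≤ t) (hc : ∀ i, 1 ≤ i → 0 ≤ c i) (H : SimpleGraph U)
    {ε : ℝ} (hε : 0 < ε) : ∃ g, IsThinned t H g ∧
      ∑ p, c p.1.card * g p ≤ fracVal (Set.Ici 1) t H c + ε := by
  obtain ⟨f, hf, hcost⟩ := exists_cost_lt (c := c) (S := Set.Ici 1) Set.self_mem_Ici ht H hε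
  set cov : Finset U → ℝ := fun T => ∑ K ∈ Finset.univ.filter (fun K => T ⊆ K), f K with hcov
  set p : Finset U → ℝ := fun T => if 1 ≤ cov T then (cov T)⁻¹ else 0 with hp
  have hp0 : ∀ T, 0 ≤ p T := by
    intro T
    simp only [hp]
    split_ifs with h
    · exact inv_nonneg.mpr (by linarith)
    · exact le_rfl
  have hp1 : ∀ T, 0 ≤ 1 - p T := by
    intro T
    simp only [hp]
    split_ifs with h
    · linarith [inv_le_one_of_one_le₀ h]
    · norm_num
  set q : Finset U → Finset (Finset U) → ℝ := fun K E =>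
    (∏ T ∈ E, p T) * ∏ T ∈ Finset.powersetCard t K \ E, (1 - p T) with hq
  have hq0 : ∀ K E, 0 ≤ q K E := fun K E =>
    mul_nonneg (Finset.prod_nonneg fun T _ => hp0 T) (Finset.prod_nonneg fun T _ => hp1 T)
  set g : Finset U × Finset (Finset U) → ℝ := fun x =>
    if x.2.Nonempty ∧ x.2 ⊆ Finset.powersetCard t x.1 then f x.1 * q x.1 x.2 else 0 with hg
  have hne : ∀ x, g x ≠ 0 → f x.1 ≠ 0 ∧ x.2.Nonempty ∧ x.2 ⊆ Finset.powersetCard t x.1 := by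
    intro x hx
    by_cases h : x.2.Nonempty ∧ x.2 ⊆ Finset.powersetCard t x.1
    · simp only [hg, if_pos h] at hx
      exact ⟨left_ne_zero_of_mul hx, h⟩
    · simp only [hg, if_neg h] at hx
      exact absurd rfl hx
  refine ⟨g, ⟨fun x => ?_, fun x hx => ?_, fun x hx => (hne x hx).2.1,
    fun x hx => (hne x hx).2.2, fun T hT hTH => ?_⟩, ?_⟩
  · simp only [hg]
    split_ifs
    exacts [mul_nonneg (hf.1 _) (hq0 _ _), le_rfl]
  · by_contra h
    exact (hne x hx).1 (hf.2.1 _ h)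
  · have hcov1 : 1 ≤ cov T := hf.2.2 T hT hTH
    have hinner : ∀ K, ∑ E, (if T ∈ E then g (K, E) else 0) = if T ⊆ K then f K * p T else 0 := by
      intro K
      split_ifs with hTK
      · have hTP : T ∈ Finset.powersetCard t K := Finset.mem_powersetCard.mpr ⟨hTK, hT⟩
        rw [← sum_powerset_prod_mul_prod_of_mem p hTP, Finset.mul_sum]
        rw [← Finset.sum_subset (Finset.subset_univ (Finset.powersetCard t K).powerset)]
        · refine Finset.sum_congr rfl fun E hE => ?_
          split_ifs with hTE
          · exact if_pos ⟨⟨T, hTE⟩, Finset.mem_powerset.mp hE⟩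
          · rw [mul_zero]
        · intro E _ hE
          rw [Finset.mem_powerset] at hE
          simp [hg, hE]
      · refine Finset.sum_eq_zero fun E _ => ?_
        split_ifs with hTE
        · exact if_neg fun h => hTK (Finset.mem_powersetCard.mp (h.2 hTE)).1
        · rfl
    rw [Fintype.sum_prod_type, Finset.sum_congr rfl fun K _ => hinner K, ← Finset.sum_filter,
      ← Finset.sum_mul]
    simp only [hp, if_pos hcov1]
    exact mul_inv_cancel₀ (by linarith)
  · refine le_trans ?_ hcost.le
    rw [Fintype.sum_prod_type]
    refine Finset.sum_le_sum fun K _ => ?_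
    by_cases hK : IsCliqueOf H K
    · dsimp only
      rw [← Finset.mul_sum]
      refine mul_le_mul_of_nonneg_left ?_ (hc _ hK.1.card_pos)
      calc ∑ E, g (K, E) = ∑ E ∈ (Finset.powersetCard t K).powerset, g (K, E) := by
            refine (Finset.sum_subset (Finset.subset_univ _) fun E _ hE => ?_).symm
            rw [Finset.mem_powerset] at hE
            simp [hg, hE]
        _ ≤ ∑ E ∈ (Finset.powersetCard t K).powerset, f K * q K E := by
            refine Finset.sum_le_sum fun E _ => ?_
            simp only [hg]
            split_ifs
            exacts [le_rfl, mul_nonneg (hf.1 K) (hq0 K E)]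
        _ = f K := by rw [← Finset.mul_sum, sum_powerset_prod_mul_prod, mul_one]
    · refine (Finset.sum_eq_zero fun E _ => ?_).le.trans (by simp [hf.2.1 K hK])
      simp [hg, hf.2.1 K hK]

theorem exists_isThinned_decomp (ht : 1 ≤ t) (hc : ∀ i, 1 ≤ i → 0 ≤ c i) (H : SimpleGraph U)
    {ε : ℝ} (hε : 0 < ε) : ∃ g, IsThinned t H g ∧
      (∀ p, g p ≠ 0 → p.2 = Finset.powersetCard t p.1) ∧
      ∑ p, c p.1.card * g p ≤ fracVal {1} t H c + ε := by
  obtain ⟨f, hf, hcost⟩ := exists_cost_lt (c := c) (S := {1}) rfl ht H hε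
  set g : Finset U × Finset (Finset U) → ℝ := fun x =>
    if x.2 = Finset.powersetCard t x.1 ∧ t ≤ x.1.card then f x.1 else 0 with hg
  have hne : ∀ x, g x ≠ 0 → f x.1 ≠ 0 ∧ x.2 = Finset.powersetCard t x.1 ∧ t ≤ x.1.card := by
    intro x hx
    by_cases h : x.2 = Finset.powersetCard t x.1 ∧ t ≤ x.1.card
    · simp only [hg, if_pos h] at hx
      exact ⟨hx, h⟩
    · simp only [hg, if_neg h] at hx
      exact absurd rfl hx
  refine ⟨g, ⟨fun x => ?_, fun x hx => ?_, fun x hx => ?_, fun x hx => (hne x hx).2.1.subset,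
    fun T hT hTH => ?_⟩, fun x hx => (hne x hx).2.1, ?_⟩
  · simp only [hg]
    split_ifs
    exacts [hf.1 _, le_rfl]
  · by_contra h
    exact (hne x hx).1 (hf.2.1 _ h)
  · rw [(hne x hx).2.1]
    exact Finset.powersetCard_nonempty.mpr (hne x hx).2.2
  · have h1 : ∑ K ∈ Finset.univ.filter (fun K => T ⊆ K), f K = 1 := hf.2.2 T hT hTH
    rw [Fintype.sum_prod_type, ← h1, Finset.sum_filter]
    refine Finset.sum_congr rfl fun K _ => ?_
    rw [Finset.sum_eq_single (Finset.powersetCard t K)]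
    · by_cases hTK : T ⊆ K
      · have : t ≤ K.card := hT ▸ Finset.card_le_card hTK
        simp [hg, hTK, hT, this]
      · simp [hTK]
    · intro E _ hE
      simp [hg, hE]
    · simp
  · refine le_trans ?_ hcost.le
    rw [Fintype.sum_prod_type]
    refine Finset.sum_le_sum fun K _ => ?_
    rw [Finset.sum_eq_single (Finset.powersetCard t K)]
    · by_cases hK : IsCliqueOf H K
      · refine mul_le_mul_of_nonneg_left ?_ (hc _ hK.1.card_pos)
        simp only [hg]
        split_ifs
        exacts [le_rfl, hf.1 K]
      · simp [hg, hf.2.1 K hK]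
    · intro E _ hE
      simp [hg, hE]
    · simp

end Thinning

/-! ### Integer weightings from matchings -/

section Assemble

variable {V I : Type} [Fintype V] [DecidableEq V] {t : ℕ} {c : ℕ → ℝ}

/-- The `t`-cliques of `G`. -/
noncomputable def cliqueSets (t : ℕ) (G : SimpleGraph V) : Finset (Finset V) :=
  Finset.univ.filter fun T => T.card = t ∧ G.IsClique (T : Set V)

lemma mem_cliqueSets {G : SimpleGraph V} {T : Finset V} :
    T ∈ cliqueSets t G ↔ T.card = t ∧ G.IsClique (T : Set V) := by
  simp [cliqueSets]

lemma card_cliqueSets_le (G : SimpleGraph V) :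
    (cliqueSets t G).card ≤ (Fintype.card V).choose t := by
  rw [← Finset.card_univ, ← Finset.card_powersetCard]
  refine Finset.card_le_card fun T hT => ?_
  simpa using (mem_cliqueSets.mp hT).1

/-- The `t`-cliques missed by the matching `M`. -/
noncomputable def uncovered (t : ℕ) (G : SimpleGraph V) (e : I → Finset (Finset V)) (M : Finset I) :
    Finset (Finset V) :=
  (cliqueSets t G).filter fun T => ∀ i ∈ M, T ∉ e i

/-- The cliques selected by the matching `M`, together with the missed `t`-cliques. -/
noncomputable def chosenCliques (t : ℕ) (G : SimpleGraph V) (k : I → Finset V) (e : I → Finset (Finset V))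
    (M : Finset I) : Finset (Finset V) :=
  M.image k ∪ uncovered t G e M

variable {G : SimpleGraph V} {k : I → Finset V} {e : I → Finset (Finset V)} {M : Finset I}

lemma isCliqueOf_of_mem_chosenCliques (ht : 1 ≤ t) (hk : ∀ i ∈ M, IsCliqueOf G (k i))
    {K : Finset V} (hK : K ∈ chosenCliques t G k e M) : IsCliqueOf G K := by
  rcases Finset.mem_union.mp hK with h | h
  · obtain ⟨i, hi, rfl⟩ := Finset.mem_image.mp h
    exact hk i hi
  · have h' := mem_cliqueSets.mp (Finset.mem_filter.mp h).1
    exact ⟨Finset.card_pos.mp (by omega), h'.2⟩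

lemma sum_chosenCliques_le (ht : 1 ≤ t) (hc : ∀ i, 1 ≤ i → 0 ≤ c i)
    (hk : ∀ i ∈ M, IsCliqueOf G (k i)) :
    ∑ K ∈ chosenCliques t G k e M, c K.card ≤
      ∑ i ∈ M, c (k i).card + c t * (uncovered t G e M).card := by
  have hnn : ∀ K ∈ chosenCliques t G k e M, 0 ≤ c K.card := fun K hK =>
    hc _ (isCliqueOf_of_mem_chosenCliques ht hk hK).1.card_pos
  have h1 : ∑ K ∈ chosenCliques t G k e M, c K.card ≤
      ∑ K ∈ M.image k, c K.card + ∑ K ∈ uncovered t G e M, c K.card := by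
    rw [← Finset.sum_union_inter]
    refine le_add_of_nonneg_right (Finset.sum_nonneg fun K hK => hnn K ?_)
    exact Finset.mem_union_left _ (Finset.mem_inter.mp hK).1
  have h2 : ∑ K ∈ M.image k, c K.card ≤ ∑ i ∈ M, c (k i).card :=
    Finset.sum_image_le_of_nonneg (f := fun K : Finset V => c K.card) fun K hK =>
      hnn K (Finset.mem_union_left _ hK)
  have h3 : ∑ K ∈ uncovered t G e M, c K.card = c t * (uncovered t G e M).card := by
    have hcard : ∀ K ∈ uncovered t G e M, c K.card = c t := fun K hK =>
      congrArg c (mem_cliqueSets.mp (Finset.mem_filter.mp hK).1).1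
    rw [Finset.sum_congr rfl hcard, Finset.sum_const, nsmul_eq_mul, mul_comm]
  linarith

lemma cliqueCost_indicator (A : Finset (Finset V)) :
    cliqueCost c (fun K => if K ∈ A then 1 else 0) = ∑ K ∈ A, c K.card := by
  simp [cliqueCost]

lemma sum_indicator_eq_card (A : Finset (Finset V)) (T : Finset V) :
    ∑ K ∈ Finset.univ.filter (fun K => T ⊆ K), (if K ∈ A then (1 : ℝ) else 0) =
      (A.filter fun K => T ⊆ K).card := by
  rw [Finset.sum_boole, Finset.filter_filter]
  congr 2
  ext K
  simp [and_comm]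

theorem thetaInt_le_of_matching (ht : 1 ≤ t) (hc : ∀ i, 1 ≤ i → 0 ≤ c i)
    (hk : ∀ i ∈ M, IsCliqueOf G (k i)) (he : ∀ i ∈ M, ∀ T ∈ e i, T ⊆ k i) :
    thetaInt t G c ≤ ∑ i ∈ M, c (k i).card + c t * (uncovered t G e M).card := by
  refine le_trans ?_ (sum_chosenCliques_le ht hc hk)
  rw [← cliqueCost_indicator]
  refine csInf_le ⟨0, ?_⟩ ⟨_, ⟨⟨fun K => ?_, fun K hK => ?_, fun T hT hTG => ?_⟩, fun K => ?_⟩, rfl⟩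
  · rintro x ⟨f, hf, rfl⟩
    exact IsFracWeighting.cost_nonneg (S := Set.Ici 1) hf.1 hc
  · split_ifs <;> norm_num
  · exact if_neg fun h => hK (isCliqueOf_of_mem_chosenCliques ht hk h)
  · rw [sum_indicator_eq_card, Nat.one_le_cast, Finset.one_le_card]
    by_cases h : ∃ i ∈ M, T ∈ e i
    · obtain ⟨i, hi, hTi⟩ := h
      exact ⟨k i, Finset.mem_filter.mpr ⟨Finset.mem_union_left _
        (Finset.mem_image_of_mem k hi), he i hi T hTi⟩⟩
    · push Not at h
      exact ⟨T, Finset.mem_filter.mpr ⟨Finset.mem_union_right _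
        (Finset.mem_filter.mpr ⟨mem_cliqueSets.mpr ⟨hT, hTG⟩, h⟩), Finset.Subset.refl _⟩⟩
  · split_ifs <;> simp

theorem piInt_le_of_matching (ht : 1 ≤ t) (hc : ∀ i, 1 ≤ i → 0 ≤ c i)
    (hk : ∀ i ∈ M, IsCliqueOf G (k i))
    (he : ∀ i ∈ M, ∀ T : Finset V, T.card = t → (T ∈ e i ↔ T ⊆ k i))
    (hM : IsMatchingFamily e M) :
    piInt t G c ≤ ∑ i ∈ M, c (k i).card + c t * (uncovered t G e M).card := by
  refine le_trans ?_ (sum_chosenCliques_le ht hc hk)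
  rw [← cliqueCost_indicator]
  refine csInf_le ⟨0, ?_⟩ ⟨_, ⟨⟨fun K => ?_, fun K hK => ?_, fun T hT hTG => ?_⟩, fun K => ?_⟩, rfl⟩
  · rintro x ⟨f, hf, rfl⟩
    exact IsFracWeighting.cost_nonneg (S := {1}) hf.1 hc
  · split_ifs <;> norm_num
  · exact if_neg fun h => hK (isCliqueOf_of_mem_chosenCliques ht hk h)
  · rw [sum_indicator_eq_card, Nat.cast_eq_one, Finset.card_eq_one]
    have hunc : ∀ K ∈ uncovered t G e M, T ⊆ K → K = T := by
      intro K hK hTK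
      have := (mem_cliqueSets.mp (Finset.mem_filter.mp hK).1).1
      exact (Finset.eq_of_subset_of_card_le hTK (by omega)).symm
    by_cases h : ∃ i ∈ M, T ∈ e i
    · obtain ⟨i, hi, hTi⟩ := h
      refine ⟨k i, Finset.eq_singleton_iff_unique_mem.mpr ⟨?_, fun K hK => ?_⟩⟩
      · exact Finset.mem_filter.mpr ⟨Finset.mem_union_left _ (Finset.mem_image_of_mem k hi),
          (he i hi T hT).mp hTi⟩
      · obtain ⟨hK, hTK⟩ := Finset.mem_filter.mp hK
        rcases Finset.mem_union.mp hK with hK | hK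
        · obtain ⟨j, hj, rfl⟩ := Finset.mem_image.mp hK
          by_contra hne
          refine Finset.disjoint_left.mp (hM i hi j hj fun hij => hne (hij ▸ rfl)) hTi ?_
          exact (he j hj T hT).mpr hTK
        · rw [hunc K hK hTK] at hK
          exact absurd hTi ((Finset.mem_filter.mp hK).2 i hi)
    · push Not at h
      refine ⟨T, Finset.eq_singleton_iff_unique_mem.mpr ⟨?_, fun K hK => ?_⟩⟩
      · exact Finset.mem_filter.mpr ⟨Finset.mem_union_right _
          (Finset.mem_filter.mpr ⟨mem_cliqueSets.mpr ⟨hT, hTG⟩, h⟩), Finset.Subset.refl _⟩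
      · obtain ⟨hK, hTK⟩ := Finset.mem_filter.mp hK
        rcases Finset.mem_union.mp hK with hK | hK
        · obtain ⟨j, hj, rfl⟩ := Finset.mem_image.mp hK
          exact absurd ((he j hj T hT).mpr hTK) (h j hj)
        · exact hunc K hK hTK
  · split_ifs <;> simp

end Assemble

/-! ### Lifts along all maps -/

section AllMaps

variable {U V : Type} [Fintype U] [DecidableEq U] [Fintype V] [DecidableEq V] {t : ℕ}

lemma isSymmFamily_allMaps : IsSymmFamily fun ψ : U → V => ψ := fun τ =>
  ⟨(Equiv.refl U).arrowCongr τ, fun _ => rfl⟩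

lemma card_filter_apply_eq_mul {a b : U} (hab : a ≠ b) :
    (Finset.univ.filter fun ψ : U → V => ψ a = ψ b).card * Fintype.card V =
      Fintype.card (U → V) := by
  rw [Fintype.card_congr (Equiv.funSplitAt a V), Fintype.card_prod, mul_comm]
  congr 1
  rw [← Finset.card_univ]
  refine Finset.card_bij (fun ψ _ => (Equiv.funSplitAt a V ψ).2) (fun _ _ => Finset.mem_univ _) ?_ ?_
  · intro ψ hψ ψ' hψ' h
    have hψ : ψ a = ψ b := (Finset.mem_filter.mp hψ).2
    have hψ' : ψ' a = ψ' b := (Finset.mem_filter.mp hψ').2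
    have hval : ∀ u (hu : u ≠ a), ψ u = ψ' u := fun u hu => congrFun h ⟨u, hu⟩
    funext u
    by_cases hu : u = a
    · rw [hu, hψ, hψ', hval b hab.symm]
    · exact hval u hu
  · intro g _
    refine ⟨(Equiv.funSplitAt a V).symm (g ⟨b, hab.symm⟩, g), ?_, by simp⟩
    simp [hab.symm]

lemma card_injOn_ge {T : Finset U} (hT : T.card = t) :
    Fintype.card (U → V) * Fintype.card V ≤
      (Finset.univ.filter fun ψ : U → V => Set.InjOn ψ T).card * Fintype.card V +
        t ^ 2 * Fintype.card (U → V) := by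
  have hsub : (Finset.univ.filter fun ψ : U → V => ¬ Set.InjOn ψ T) ⊆
      T.offDiag.biUnion fun p => Finset.univ.filter fun ψ : U → V => ψ p.1 = ψ p.2 := by
    intro ψ hψ
    have hψ := (Finset.mem_filter.mp hψ).2
    simp only [Set.InjOn, not_forall] at hψ
    obtain ⟨a, ha, b, hb, h, hab⟩ := hψ
    exact Finset.mem_biUnion.mpr ⟨(a, b), Finset.mem_offDiag.mpr ⟨ha, hb, hab⟩,
      Finset.mem_filter.mpr ⟨Finset.mem_univ _, h⟩⟩
  have h1 : (Finset.univ.filter fun ψ : U → V => ¬ Set.InjOn ψ T).card * Fintype.card V ≤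
      t ^ 2 * Fintype.card (U → V) := by
    calc _ ≤ (∑ p ∈ T.offDiag, (Finset.univ.filter fun ψ : U → V => ψ p.1 = ψ p.2).card) *
          Fintype.card V :=
          Nat.mul_le_mul_right _ ((Finset.card_le_card hsub).trans Finset.card_biUnion_le)
      _ = ∑ p ∈ T.offDiag, Fintype.card (U → V) := by
          rw [Finset.sum_mul]
          exact Finset.sum_congr rfl fun p hp =>
            card_filter_apply_eq_mul (Finset.mem_offDiag.mp hp).2.2
      _ ≤ _ := by
          rw [Finset.sum_const, smul_eq_mul, Finset.offDiag_card, hT]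
          refine Nat.mul_le_mul_right _ ?_
          rw [sq]
          exact Nat.sub_le _ _
  have h2 := Finset.card_filter_add_card_filter_not (s := (Finset.univ : Finset (U → V)))
    fun ψ => Set.InjOn ψ T
  rw [Finset.card_univ] at h2
  rw [← h2] at h1 ⊢
  nlinarith

lemma card_injPairs_ge :
    ((Fintype.card U).choose t * Fintype.card (U → V) : ℝ) * (Fintype.card V - (t : ℝ) ^ 2) ≤
      (injPairs (fun ψ : U → V => ψ) t).card * Fintype.card V := by
  have hsum : (injPairs (fun ψ : U → V => ψ) t).card =
      ∑ T ∈ Finset.powersetCard t (Finset.univ : Finset U),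
        (Finset.univ.filter fun ψ : U → V => Set.InjOn ψ T).card := by
    rw [injPairs, Finset.card_filter, Finset.sum_product_right]
    simp only [Finset.card_filter]
  have h : ∀ T ∈ Finset.powersetCard t (Finset.univ : Finset U),
      (Fintype.card (U → V) : ℝ) * (Fintype.card V - (t : ℝ) ^ 2) ≤
        (Finset.univ.filter fun ψ : U → V => Set.InjOn ψ T).card * Fintype.card V := by
    intro T hT
    have h1 : (Fintype.card (U → V) * Fintype.card V : ℝ) ≤
      (Finset.univ.filter fun ψ : U → V => Set.InjOn ψ T).card * Fintype.card V +
        t ^ 2 * Fintype.card (U → V) := by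
      exact_mod_cast card_injOn_ge (V := V) (Finset.mem_powersetCard_univ.mp hT)
    linarith
  have h3 := Finset.sum_le_sum h
  rw [Finset.sum_const, Finset.card_powersetCard, Finset.card_univ, nsmul_eq_mul,
    ← Finset.sum_mul, ← mul_assoc] at h3
  rw [hsum]
  push_cast
  exact h3

/-- A fixed vertex outside `T` is rarely hit by a map together with a lift of `T`. -/
lemma card_liftPairs_hit_mul_le {T : Finset V} (hT : T.card = t) {y : V} (hy : y ∉ T) :
    ((liftPairs (fun ψ : U → V => ψ) t T).filter fun p => ∃ u, p.1 u = y).card *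
      (Fintype.card V - t) ≤ Fintype.card U * (liftPairs (fun ψ : U → V => ψ) t T).card := by
  set L := liftPairs (fun ψ : U → V => ψ) t T with hL
  have hsymm : ∀ z ∈ Tᶜ, (L.filter fun p => ∃ u, p.1 u = y).card ≤
      (L.filter fun p => ∃ u, p.1 u = z).card := by
    intro z hz
    have hz : z ∉ T := Finset.mem_compl.mp hz
    refine Finset.card_le_card_of_injOn (fun p => (Equiv.swap y z ∘ p.1, p.2)) ?_ ?_
    · intro p hp
      obtain ⟨hp, u, hu⟩ := Finset.mem_filter.mp hp
      rw [hL, mem_liftPairs] at hp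
      refine Finset.mem_filter.mpr ⟨?_, u, by simp [hu]⟩
      rw [hL, mem_liftPairs]
      refine ⟨hp.1, ?_⟩
      dsimp only
      rw [← Finset.image_image]
      have hp2 : Finset.image p.1 p.2 = T := hp.2
      rw [hp2]
      conv_rhs => rw [← Finset.image_id (s := T)]
      refine Finset.image_congr fun v hv => ?_
      exact Equiv.swap_apply_of_ne_of_ne (fun h => hy (h ▸ hv)) (fun h => hz (h ▸ hv))
    · rintro ⟨ψ, A⟩ _ ⟨ψ', A'⟩ _ h
      simp only [Prod.mk.injEq] at h ⊢
      exact ⟨(Equiv.swap y z).injective.comp_left h.1, h.2⟩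
  calc _ = ∑ z ∈ Tᶜ, (L.filter fun p => ∃ u, p.1 u = y).card := by
        rw [Finset.sum_const, Finset.card_compl, hT, smul_eq_mul, mul_comm]
    _ ≤ ∑ z ∈ Tᶜ, (L.filter fun p => ∃ u, p.1 u = z).card := Finset.sum_le_sum hsymm
    _ ≤ ∑ z, (L.filter fun p => ∃ u, p.1 u = z).card :=
        Finset.sum_le_sum_of_subset (Finset.subset_univ _)
    _ = ∑ p ∈ L, (Finset.univ.filter fun z => ∃ u, p.1 u = z).card := by
        simp only [Finset.card_filter]
        exact Finset.sum_comm
    _ ≤ ∑ p ∈ L, Fintype.card U := by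
        refine Finset.sum_le_sum fun p _ => ?_
        have : (Finset.univ.filter fun z => ∃ u, p.1 u = z) = Finset.univ.image p.1 := by
          ext z
          simp
        rw [this, ← Finset.card_univ]
        exact Finset.card_image_le
    _ = _ := by rw [Finset.sum_const, smul_eq_mul, mul_comm]

end AllMaps

/-! ### Rounding -/

section Rounding

variable {U V : Type} [Fintype U] [DecidableEq U] [Fintype V] [DecidableEq V] {t : ℕ}
  {c : ℕ → ℝ}

lemma ite_mem_image_eq_sum {φ : U → V} {K : Finset U} (hK : Set.InjOn φ K)
    {E : Finset (Finset U)} (hE : E ⊆ Finset.powersetCard t K) (T : Finset V) (a : ℝ) :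
    (if T ∈ E.image (Finset.image φ) then a else 0) =
      ∑ T' ∈ (Finset.powersetCard t Finset.univ).filter (fun T' : Finset U => T'.image φ = T),
        if T' ∈ E then a else 0 := by
  split_ifs with h
  · obtain ⟨T', hT', rfl⟩ := Finset.mem_image.mp h
    have hT'K := Finset.mem_powersetCard.mp (hE hT')
    rw [Finset.sum_eq_single T']
    · rw [if_pos hT']
    · intro A hA hne
      refine if_neg fun hAE => hne ?_
      have hAK := Finset.mem_powersetCard.mp (hE hAE)
      obtain ⟨_, h2⟩ := subset_image_iff_existsUnique hK (Finset.image_subset_image hT'K.1)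
      exact (h2 A hAK.1 (Finset.mem_filter.mp hA).2).trans (h2 T' hT'K.1 rfl).symm
    · intro hnot
      exact (hnot (Finset.mem_filter.mpr ⟨Finset.mem_powersetCard_univ.mpr hT'K.2, rfl⟩)).elim
  · refine (Finset.sum_eq_zero fun T' hT' => if_neg fun hTE => h ?_).symm
    exact Finset.mem_image.mpr ⟨T', hTE, (Finset.mem_filter.mp hT').2⟩

/-- The set of `t`-sets of `V` that the index `(ψ, K, E)` is responsible for. -/
def pushEdge (i : (U → V) × Finset U × Finset (Finset U)) : Finset (Finset V) :=
  i.2.2.image (Finset.image i.1)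

lemma sum_pushEdge_eq_card {G : SimpleGraph V} {ψ : U → V}
    {g : Finset U × Finset (Finset U) → ℝ} (hg : IsThinned t (G.comap ψ) g) {T : Finset V}
    (hT : T ∈ cliqueSets t G) :
    ∑ p, (if T ∈ pushEdge (ψ, p) then g p else 0) =
      ((Finset.powersetCard t Finset.univ).filter
        fun T' : Finset U => T'.image ψ = T).card := by
  rw [mem_cliqueSets] at hT
  have hpt : ∀ p, (if T ∈ pushEdge (ψ, p) then g p else 0) =
      ∑ T' ∈ (Finset.powersetCard t Finset.univ).filter (fun T' : Finset U => T'.image ψ = T),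
        if T' ∈ p.2 then g p else 0 := by
    intro p
    by_cases h0 : g p = 0
    · simp [h0]
    · have hinj : Set.InjOn ψ p.1 := injOn_of_isClique (G := G) (H := G.comap ψ)
        (fun _ _ h => h) (hg.isClique p h0).2
      exact ite_mem_image_eq_sum hinj (hg.subset p h0) T _
  rw [Finset.sum_congr rfl fun p _ => hpt p, Finset.sum_comm, Finset.sum_congr rfl fun T' hT' => ?_,
    Finset.sum_const, nsmul_eq_mul, mul_one]
  obtain ⟨h1, h2⟩ := Finset.mem_filter.mp hT'
  rw [Finset.mem_powersetCard_univ] at h1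
  exact hg.degree T' h1 (isClique_comap_of_image (injOn_of_card_image h2 (h1.trans hT.1.symm))
    (h2 ▸ hT.2))

lemma sum_subtype_ne_zero {ι : Type} [Fintype ι] (w : ι → ℝ) (F : ι → ℝ)
    (hF : ∀ i, w i = 0 → F i = 0) : ∑ i : {i // w i ≠ 0}, F i = ∑ i, F i := by
  rw [← Finset.sum_subtype (Finset.univ.filter fun i => w i ≠ 0) (by simp) F]
  refine Finset.sum_subset (Finset.subset_univ _) fun i _ hi => hF i ?_
  simpa using hi

variable {G : SimpleGraph V} {g : (U → V) → Finset U × Finset (Finset U) → ℝ}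

lemma sum_degree_eq (hg : ∀ ψ, IsThinned t (G.comap ψ) (g ψ)) {T : Finset V}
    (hT : T ∈ cliqueSets t G) :
    ∑ i : (U → V) × Finset U × Finset (Finset U), (if T ∈ pushEdge i then g i.1 i.2 else 0) =
      (liftPairs (fun ψ : U → V => ψ) t T).card := by
  rw [Fintype.sum_prod_type, Finset.sum_congr rfl fun ψ _ => sum_pushEdge_eq_card (hg ψ) hT,
    liftPairs, Finset.card_filter, Finset.sum_product]
  simp only [Finset.card_filter]
  push_cast
  rfl

lemma sum_codegree_le (hg : ∀ ψ, IsThinned t (G.comap ψ) (g ψ)) {T T₂ : Finset V}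
    (hT : T ∈ cliqueSets t G) {y : V} (hy : y ∈ T₂) :
    ∑ i : (U → V) × Finset U × Finset (Finset U),
      (if T ∈ pushEdge i ∧ T₂ ∈ pushEdge i then g i.1 i.2 else 0) ≤
      ((liftPairs (fun ψ : U → V => ψ) t T).filter fun p => ∃ u, p.1 u = y).card := by
  have hψ : ∀ ψ : U → V, ∑ p, (if T ∈ pushEdge (ψ, p) ∧ T₂ ∈ pushEdge (ψ, p) then g ψ p else 0) ≤
      if ∃ u, ψ u = y then (((Finset.powersetCard t Finset.univ).filter
        fun T' : Finset U => T'.image ψ = T).card : ℝ) else 0 := by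
    intro ψ
    split_ifs with h
    · rw [← sum_pushEdge_eq_card (hg ψ) hT]
      refine Finset.sum_le_sum fun p _ => ?_
      by_cases h1 : T ∈ pushEdge (ψ, p)
      · by_cases h2 : T₂ ∈ pushEdge (ψ, p)
        · simp [h1, h2]
        · simpa [h1, h2] using (hg ψ).nonneg p
      · simp [h1]
    · refine (Finset.sum_eq_zero fun p _ => if_neg fun h2 => h ?_).le
      obtain ⟨T', _, h3⟩ := Finset.mem_image.mp h2.2
      have h3 : T'.image ψ = T₂ := h3
      rw [← h3] at hy
      obtain ⟨u, _, hu⟩ := Finset.mem_image.mp hy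
      exact ⟨u, hu⟩
  rw [Fintype.sum_prod_type]
  refine (Finset.sum_le_sum fun ψ _ => hψ ψ).trans (le_of_eq ?_)
  rw [liftPairs, Finset.filter_filter, Finset.card_filter, Finset.sum_product]
  push_cast
  refine Finset.sum_congr rfl fun ψ _ => ?_
  split_ifs with h
  · rw [Finset.card_filter]
    push_cast
    exact Finset.sum_congr rfl fun T' _ => by simp [h]
  · exact (Finset.sum_eq_zero fun T' _ => by simp [h]).symm

/-- A family of thinned weightings of all pullbacks of `G` can be rounded to a matching. -/
theorem exists_matching {s : ℕ} (ht : 1 ≤ t) (hts : t ≤ s) (hc : ∀ i, 1 ≤ i → 0 ≤ c i) {γ : ℝ}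
    (hγ : 0 < γ) : ∃ n₀ : ℕ, ∀ n, n₀ < n → ∀ (G : SimpleGraph (Fin n))
      (g : (Fin s → Fin n) → Finset (Fin s) × Finset (Finset (Fin s)) → ℝ),
      (∀ ψ, IsThinned t (G.comap ψ) (g ψ)) →
      ∃ M : Finset ((Fin s → Fin n) × Finset (Fin s) × Finset (Finset (Fin s))),
        (∀ i ∈ M, g i.1 i.2 ≠ 0) ∧ IsMatchingFamily pushEdge M ∧
        ∑ i ∈ M, c i.2.1.card + c t * (uncovered t G pushEdge M).card ≤
          n.choose t * ((∑ ψ, ∑ p, c p.1.card * g ψ p) /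
            (s.choose t * Fintype.card (Fin s → Fin n)) * (1 + γ) + γ) := by
  set B : ℝ := 1 + ∑ k ∈ Finset.range (s + 1), |c k| with hB
  have hB0 : 0 < B := by positivity
  have hcB : ∀ k ≤ s, c k ≤ B := by
    intro k hk
    have := Finset.single_le_sum (f := fun k => |c k|) (fun k _ => abs_nonneg (c k))
      (Finset.mem_range.mpr (Nat.lt_succ_of_le hk))
    have h2 : c k ≤ |c k| := le_abs_self _
    linarith
  obtain ⟨δ, hδ, hnib⟩ := exists_nibble (Fintype.card (Finset (Fin s)))
    (show 0 < γ / B by positivity)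
  obtain ⟨n₁, hn₁⟩ := exists_nat_gt (s / δ + t)
  obtain ⟨n₂, hn₂⟩ := exists_nat_gt ((1 + γ) * (t : ℝ) ^ 2 / γ)
  refine ⟨max n₁ (max n₂ (t ^ 2)), fun n hn G g hg => ?_⟩
  have hnt2 : t ^ 2 < n := ((le_max_right _ _).trans (le_max_right _ _)).trans_lt hn
  have hnt : t < n := by nlinarith
  have hnt2R : (t : ℝ) ^ 2 < n := by exact_mod_cast hnt2
  have hn₁' : (s : ℝ) / δ + t < n :=
    hn₁.trans (by exact_mod_cast (le_max_left _ _).trans_lt hn)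
  have hn₂' : (1 + γ) * (t : ℝ) ^ 2 / γ < n :=
    hn₂.trans (by exact_mod_cast ((le_max_left _ _).trans (le_max_right _ _)).trans_lt hn)
  have hn0 : (0 : ℝ) < n := by exact_mod_cast (by omega : 0 < n)
  have : Nonempty (Fin n) := ⟨⟨0, by omega⟩⟩
  set N : ℝ := s.choose t * Fintype.card (Fin s → Fin n) with hN
  have hN0 : 0 < N := by
    have h1 : 0 < s.choose t := Nat.choose_pos hts
    have h2 : 0 < Fintype.card (Fin s → Fin n) := Fintype.card_pos
    positivity
  have hCn : (0 : ℝ) < n.choose t := by exact_mod_cast Nat.choose_pos hnt.le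
  set Z : ℝ := (injPairs (fun ψ : Fin s → Fin n => ψ) t).card / n.choose t with hZ
  have hinj : N ≤ (1 + γ) * (injPairs (fun ψ : Fin s → Fin n => ψ) t).card := by
    have h := card_injPairs_ge (U := Fin s) (V := Fin n) (t := t)
    simp only [Fintype.card_fin] at h
    have h' : N * (n - (t : ℝ) ^ 2) ≤ (injPairs (fun ψ : Fin s → Fin n => ψ) t).card * n := by
      rw [hN]
      simpa using h
    rw [div_lt_iff₀ hγ] at hn₂'
    have h2 : (n : ℝ) ≤ (1 + γ) * (n - (t : ℝ) ^ 2) := by linarith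
    refine le_of_mul_le_mul_right (a := (n : ℝ)) ?_ hn0
    calc N * n ≤ N * ((1 + γ) * (n - (t : ℝ) ^ 2)) := by gcongr
      _ = (1 + γ) * (N * (n - (t : ℝ) ^ 2)) := by ring
      _ ≤ (1 + γ) * ((injPairs (fun ψ : Fin s → Fin n => ψ) t).card * n) := by gcongr
      _ = _ := by ring
  have hZN : N ≤ (1 + γ) * (Z * n.choose t) := by
    rwa [hZ, div_mul_cancel₀ _ hCn.ne']
  have hZ0 : 0 < Z := by
    by_contra h
    have : (1 + γ) * (Z * n.choose t) ≤ 0 := mul_nonpos_of_nonneg_of_nonpos (by positivity)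
      (mul_nonpos_of_nonpos_of_nonneg (not_lt.mp h) hCn.le)
    linarith
  have hlift : ∀ T : Finset (Fin n), T.card = t →
      ((liftPairs (fun ψ : Fin s → Fin n => ψ) t T).card : ℝ) = Z := by
    intro T hT
    rw [hZ, eq_div_iff hCn.ne']
    have := isSymmFamily_allMaps (U := Fin s).card_liftPairs_mul_choose hT
    rw [Fintype.card_fin] at this
    exact_mod_cast this
  set I := {i : (Fin s → Fin n) × Finset (Fin s) × Finset (Finset (Fin s)) // g i.1 i.2 ≠ 0}
    with hI
  have hFM : IsFracMatching (fun i : I => pushEdge i.1) (fun i => g i.1.1 i.1.2 / Z)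
      (cliqueSets t G) (Fintype.card (Finset (Fin s))) δ := by
    refine ⟨fun i => div_nonneg ((hg _).nonneg _) hZ0.le,
      fun i => ((hg _).nonempty _ i.2).image _, fun i => ?_, fun i => ?_, fun T hT => ?_,
      fun T hT T₂ hT₂ hne => ?_⟩
    · intro T hT
      obtain ⟨T', hT', rfl⟩ := Finset.mem_image.mp hT
      have hcl := ((hg _).isClique _ i.2).2
      obtain ⟨hsub, hcard⟩ := Finset.mem_powersetCard.mp ((hg _).subset _ i.2 hT')
      have hT'cl := hcl.subset (Finset.coe_subset.mpr hsub)
      refine mem_cliqueSets.mpr ⟨?_, isClique_image (G := G) (H := G.comap i.1.1) (fun _ _ h => h) hT'cl⟩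
      rw [Finset.card_image_of_injOn (injOn_of_isClique (G := G) (H := G.comap i.1.1)
        (fun _ _ h => h) hT'cl), hcard]
    · exact Finset.card_image_le.trans (Finset.card_le_univ _)
    · have h := sum_degree_eq hg hT
      rw [hlift T (mem_cliqueSets.mp hT).1, ← sum_subtype_ne_zero (fun i => g i.1 i.2) _
        (fun i hi => by simp [hi])] at h
      rw [← div_self hZ0.ne']
      nth_rewrite 2 [← h]
      rw [Finset.sum_div]
      refine Finset.sum_congr rfl fun i _ => ?_
      split_ifs <;> simp
    · have hTc := mem_cliqueSets.mp hT
      have hT₂c := mem_cliqueSets.mp hT₂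
      obtain ⟨y, hy₂, hy⟩ := Finset.not_subset.mp fun h : T₂ ⊆ T =>
        hne (Finset.eq_of_subset_of_card_le h (by rw [hTc.1, hT₂c.1])).symm
      obtain ⟨A, h, hhit⟩ : ∃ A : ℕ,
          ∑ i : (Fin s → Fin n) × Finset (Fin s) × Finset (Finset (Fin s)),
            (if T ∈ pushEdge i ∧ T₂ ∈ pushEdge i then g i.1 i.2 else 0) ≤ A ∧
          A * (n - t) ≤ s * (liftPairs (fun ψ : Fin s → Fin n => ψ) t T).card := by
        refine ⟨_, sum_codegree_le hg hT hy₂, ?_⟩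
        have hhit := card_liftPairs_hit_mul_le (U := Fin s) hTc.1 hy
        simp only [Fintype.card_fin] at hhit
        convert hhit
      have hhitR : (A : ℝ) * (n - t) ≤ s * Z := by
        rw [← hlift T hTc.1, ← Nat.cast_sub hnt.le]
        exact_mod_cast hhit
      have hsδ : (s : ℝ) ≤ δ * (n - t) := by
        have := (div_lt_iff₀ hδ).mp (by linarith : (s : ℝ) / δ < n - t)
        linarith
      have hntR : (0 : ℝ) < n - t := by
        have : (t : ℝ) < n := by exact_mod_cast hnt
        linarith
      have hAZ : (A : ℝ) ≤ δ * Z := by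
        refine le_of_mul_le_mul_right (a := (n : ℝ) - t) ?_ hntR
        calc (A : ℝ) * (n - t) ≤ s * Z := hhitR
          _ ≤ δ * (n - t) * Z := by gcongr
          _ = _ := by ring
      rw [← sum_subtype_ne_zero (fun i => g i.1 i.2) _ (fun i hi => by simp [hi])] at h
      have h' := (div_le_iff₀ hZ0).mpr (h.trans hAZ)
      rw [Finset.sum_div] at h'
      refine le_trans (le_of_eq (Finset.sum_congr rfl fun i _ => ?_)) h'
      split_ifs <;> simp
  have hKc : ∀ i : I, 1 ≤ i.1.2.1.card := fun i => ((hg _).isClique _ i.2).1.card_pos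
  have hKs : ∀ i : I, i.1.2.1.card ≤ s := fun i => (Finset.card_le_univ _).trans (by simp)
  obtain ⟨M, hM, hcost⟩ := hnib _ _ _ hFM (fun i => c i.1.2.1.card / B)
    (fun i => div_nonneg (hc _ (hKc i)) hB0.le)
    (fun i => (div_le_one hB0).mpr (hcB _ (hKs i)))
  refine ⟨M.map (Function.Embedding.subtype _), ?_, ?_, ?_⟩
  · intro i hi
    obtain ⟨j, _, rfl⟩ := Finset.mem_map.mp hi
    exact j.2
  · intro i hi j hj hij
    obtain ⟨i, hi', rfl⟩ := Finset.mem_map.mp hi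
    obtain ⟨j, hj', rfl⟩ := Finset.mem_map.mp hj
    exact hM i hi' j hj' fun h => hij (h ▸ rfl)
  · rw [Finset.sum_map]
    set Y := (uncovered t G pushEdge (M.map (Function.Embedding.subtype _))).card with hY
    have hYeq : ((cliqueSets t G).filter fun x => ∀ i ∈ M, x ∉ pushEdge i.1).card = Y := by
      rw [hY, uncovered]
      congr 1
      ext T
      simp only [Finset.mem_filter, Finset.mem_map, Function.Embedding.subtype_apply]
      refine and_congr_right fun _ => ⟨?_, fun h i hi => h i.1 ⟨i, hi, rfl⟩⟩
      rintro h _ ⟨i, hi, rfl⟩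
      exact h i hi
    have hcost' : (∑ i ∈ M, c i.1.2.1.card) / B + Y ≤
        (∑ i : I, c i.1.2.1.card * g i.1.1 i.1.2) / Z / B + γ / B * (cliqueSets t G).card := by
      rw [← hYeq, Finset.sum_div, Finset.sum_div, Finset.sum_div]
      convert hcost using 2
      · congr!
      · exact Finset.sum_congr rfl fun i _ => by ring
    have hsum : ∑ i : I, c i.1.2.1.card * g i.1.1 i.1.2 = ∑ ψ, ∑ p, c p.1.card * g ψ p := by
      have h := sum_subtype_ne_zero (fun i : (Fin s → Fin n) × Finset (Fin s) ×
        Finset (Finset (Fin s)) => g i.1 i.2) (fun i => c i.2.1.card * g i.1 i.2)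
        (fun i (hi : g i.1 i.2 = 0) => by rw [hi, mul_zero])
      rw [Fintype.sum_prod_type] at h
      exact h
    have hsum0 : 0 ≤ ∑ i : I, c i.1.2.1.card * g i.1.1 i.1.2 :=
      Finset.sum_nonneg fun i _ => mul_nonneg (hc _ (hKc i)) ((hg _).nonneg _)
    rw [hsum] at hcost' hsum0
    set Q := ∑ ψ, ∑ p, c p.1.card * g ψ p
    have hX : ((cliqueSets t G).card : ℝ) ≤ n.choose t := by
      have h := card_cliqueSets_le (t := t) G
      rw [Fintype.card_fin] at h
      exact_mod_cast h
    have hQ : Q / Z ≤ n.choose t * (Q / N * (1 + γ)) := by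
      rw [div_le_iff₀ hZ0]
      calc Q = Q / N * N := (div_mul_cancel₀ _ hN0.ne').symm
        _ ≤ Q / N * ((1 + γ) * (Z * n.choose t)) := by gcongr
        _ = _ := by ring
    have hYB : c t * Y ≤ B * Y := mul_le_mul_of_nonneg_right (hcB t hts) (Nat.cast_nonneg _)
    have hmul := mul_le_mul_of_nonneg_right hcost' hB0.le
    have e1 : ((∑ i ∈ M, c i.1.2.1.card) / B + Y) * B = ∑ i ∈ M, c i.1.2.1.card + B * Y := by
      field_simp
    have e2 : (Q / Z / B + γ / B * (cliqueSets t G).card) * B =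
        Q / Z + γ * (cliqueSets t G).card := by
      field_simp
    rw [e1, e2] at hmul
    have hγX : γ * (cliqueSets t G).card ≤ γ * n.choose t := by gcongr
    calc ∑ i ∈ M, c i.1.2.1.card + c t * Y ≤ Q / Z + γ * (cliqueSets t G).card := by linarith
      _ ≤ n.choose t * (Q / N * (1 + γ)) + γ * n.choose t := by linarith
      _ = _ := by ring

end Rounding

section IntegerBounds

variable {t : ℕ} {c : ℕ → ℝ}

lemma isCliqueOf_image_pullback {U V : Type} [Fintype U] [DecidableEq U] [Fintype V]
    [DecidableEq V] {G : SimpleGraph V} {ψ : U → V} {K : Finset U}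
    (hK : IsCliqueOf (G.comap ψ) K) :
    IsCliqueOf G (K.image ψ) ∧ Set.InjOn ψ K ∧ (K.image ψ).card = K.card := by
  have hinj : Set.InjOn ψ K :=
    injOn_of_isClique (G := G) (H := G.comap ψ) (fun _ _ h => h) hK.2
  exact ⟨⟨hK.1.image _, isClique_image (G := G) (H := G.comap ψ) (fun _ _ h => h) hK.2⟩, hinj,
    Finset.card_image_of_injOn hinj⟩

lemma mem_image_powersetCard_iff {U V : Type} [DecidableEq U] [DecidableEq V] {ψ : U → V}
    {K : Finset U} (hK : Set.InjOn ψ K) {T : Finset V} (hT : T.card = t) :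
    T ∈ (Finset.powersetCard t K).image (Finset.image ψ) ↔ T ⊆ K.image ψ := by
  constructor
  · intro h
    obtain ⟨T', hT', rfl⟩ := Finset.mem_image.mp h
    exact Finset.image_subset_image (Finset.mem_powersetCard.mp hT').1
  · intro h
    obtain ⟨T', hT', rfl⟩ := Finset.subset_image_iff.mp h
    refine Finset.mem_image.mpr ⟨T', Finset.mem_powersetCard.mpr ⟨by exact_mod_cast hT', ?_⟩, rfl⟩
    rw [← hT, Finset.card_image_of_injOn (hK.mono hT')]

lemma average_cost_le {S : Set ℝ} {s n : ℕ} [Nonempty (Fin n)] (hts : t ≤ s) {ε : ℝ} (hε : 0 ≤ ε)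
    {G : SimpleGraph (Fin n)} {cost : (Fin s → Fin n) → ℝ}
    (h : ∀ ψ, cost ψ ≤ fracVal S t (G.comap ψ) c + ε) :
    (∑ ψ, cost ψ) / (s.choose t * Fintype.card (Fin s → Fin n)) ≤ avgDensity S t c G s + ε := by
  have hC : (1 : ℝ) ≤ s.choose t := by exact_mod_cast Nat.choose_pos hts
  have hC0 : (0 : ℝ) < s.choose t := by linarith
  have hN : (0 : ℝ) < Fintype.card (Fin s → Fin n) := by exact_mod_cast Fintype.card_pos
  have hψ : ∀ ψ, cost ψ / s.choose t ≤ fracDensity S t (G.comap ψ) c + ε := by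
    intro ψ
    rw [fracDensity, Fintype.card_fin]
    calc cost ψ / s.choose t ≤ (fracVal S t (G.comap ψ) c + ε) / s.choose t := by
          gcongr
          exact h ψ
      _ = fracVal S t (G.comap ψ) c / s.choose t + ε / s.choose t := add_div _ _ _
      _ ≤ _ := by
          gcongr
          exact div_le_self hε hC
  rw [← div_div, Finset.sum_div, avgDensity, div_le_iff₀ hN, add_mul, div_mul_cancel₀ _ hN.ne']
  refine (Finset.sum_le_sum fun ψ _ => hψ ψ).trans (le_of_eq ?_)
  rw [Finset.sum_add_distrib, Finset.sum_const, nsmul_eq_mul, Finset.card_univ, mul_comm ε]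

/-- For `n` large, integer covers of an `n`-vertex graph cost asymptotically at most the average
fractional cover density of its `s`-vertex pullbacks. -/
theorem exists_thetaInt_le {s : ℕ} (ht : 1 ≤ t) (hts : t ≤ s) (hc : ∀ i, 1 ≤ i → 0 ≤ c i) {γ : ℝ}
    (hγ : 0 < γ) : ∃ n₀ : ℕ, ∀ n, n₀ < n → ∀ G : SimpleGraph (Fin n), thetaInt t G c ≤
      n.choose t * ((avgDensity (Set.Ici 1) t c G s + γ) * (1 + γ) + γ) := by
  obtain ⟨n₀, hn₀⟩ := exists_matching (s := s) ht hts hc hγ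
  refine ⟨n₀, fun n hn G => ?_⟩
  have : Nonempty (Fin n) := ⟨⟨0, by omega⟩⟩
  choose g hg hcost using fun ψ : Fin s → Fin n => exists_isThinned_cover ht hc (G.comap ψ) hγ
  obtain ⟨M, hM, -, hle⟩ := hn₀ n hn G g hg
  have hk := fun i hi => isCliqueOf_image_pullback ((hg _).isClique _ (hM i hi))
  have h := thetaInt_le_of_matching ht hc (e := pushEdge) (k := fun i => i.2.1.image i.1)
    (fun i hi => (hk i hi).1) fun i hi T hT => by
      obtain ⟨T', hT', rfl⟩ := Finset.mem_image.mp hT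
      exact Finset.image_subset_image
        (Finset.mem_powersetCard.mp ((hg _).subset _ (hM i hi) hT')).1
  rw [Finset.sum_congr rfl fun i hi => congrArg c (hk i hi).2.2] at h
  refine h.trans (hle.trans ?_)
  gcongr
  exact average_cost_le hts hγ.le hcost

/-- For `n` large, integer decompositions of an `n`-vertex graph cost asymptotically at most the
average fractional decomposition density of its `s`-vertex pullbacks. -/
theorem exists_piInt_le {s : ℕ} (ht : 1 ≤ t) (hts : t ≤ s) (hc : ∀ i, 1 ≤ i → 0 ≤ c i) {γ : ℝ}
    (hγ : 0 < γ) : ∃ n₀ : ℕ, ∀ n, n₀ < n → ∀ G : SimpleGraph (Fin n), piInt t G c ≤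
      n.choose t * ((avgDensity {1} t c G s + γ) * (1 + γ) + γ) := by
  obtain ⟨n₀, hn₀⟩ := exists_matching (s := s) ht hts hc hγ
  refine ⟨n₀, fun n hn G => ?_⟩
  have : Nonempty (Fin n) := ⟨⟨0, by omega⟩⟩
  choose g hg hg₂ hcost using fun ψ : Fin s → Fin n =>
    exists_isThinned_decomp ht hc (G.comap ψ) hγ
  obtain ⟨M, hM, hmatch, hle⟩ := hn₀ n hn G g hg
  have hk := fun i hi => isCliqueOf_image_pullback ((hg _).isClique _ (hM i hi))
  have h := piInt_le_of_matching ht hc (e := pushEdge) (k := fun i => i.2.1.image i.1)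
    (fun i hi => (hk i hi).1) (fun i hi T hT => by
      rw [pushEdge, hg₂ _ _ (hM i hi)]
      exact mem_image_powersetCard_iff (hk i hi).2.1 hT) hmatch
  rw [Finset.sum_congr rfl fun i hi => congrArg c (hk i hi).2.2] at h
  refine h.trans (hle.trans ?_)
  gcongr
  exact average_cost_le hts hγ.le hcost

lemma choose_mul_le_of_approx {t n : ℕ} {a x v b γ ε ρ : ℝ} (ha0 : 0 ≤ a) (hab : a ≤ b)
    (hax : a - ε ≤ x) (hxb : x ≤ b) (hγ0 : 0 < γ) (hγ1 : γ ≤ 1)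
    (hρ : ε + γ * (2 * b + 3) ≤ ρ)
    (hv : (1 - γ) * (n : ℝ) ^ t * (x / t.factorial) ≤ v) (hρ0 : 0 ≤ ρ) :
    n.choose t * ((a + γ) * (1 + γ) + γ) ≤ v + ρ * (n : ℝ) ^ t := by
  have hfac : (1 : ℝ) ≤ t.factorial := by exact_mod_cast t.factorial_pos
  have hch : (n.choose t : ℝ) ≤ (n : ℝ) ^ t / t.factorial := Nat.choose_le_pow_div t n
  have hm0 : 0 ≤ (n : ℝ) ^ t / t.factorial := by positivity
  have hm1 : (n : ℝ) ^ t / t.factorial ≤ (n : ℝ) ^ t := div_le_self (by positivity) hfac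
  have key : (a + γ) * (1 + γ) + γ ≤ (1 - γ) * x + ρ := by nlinarith
  calc n.choose t * ((a + γ) * (1 + γ) + γ)
      ≤ (n : ℝ) ^ t / t.factorial * ((a + γ) * (1 + γ) + γ) := by gcongr
    _ ≤ (n : ℝ) ^ t / t.factorial * ((1 - γ) * x + ρ) := by gcongr
    _ = (1 - γ) * (n : ℝ) ^ t * (x / t.factorial) + ρ * ((n : ℝ) ^ t / t.factorial) := by ring
    _ ≤ _ := by gcongr

end IntegerBounds

/-- Theorem 1.9: for every `ρ > 0`, for all sufficiently large `n`, for every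
`n`-vertex graph `G` there is an `n`-vertex graph `G̃` such that
`θ_t(G,c) ≤ θ*_t(G̃,c) + ρ nᵗ` and `π_t(G,c) ≤ π*_t(G̃,c) + ρ nᵗ`. -/
theorem stmt6 (t : ℕ) (ht : 2 ≤ t) (c : ℕ → ℝ) (hc : ∀ i, 1 ≤ i → 0 ≤ c i)
    (hc1 : ∀ i, t ≤ i → 1 ≤ c i) :
    ∀ ρ : ℝ, 0 < ρ → ∃ n₀ : ℕ, ∀ n : ℕ, n₀ < n → ∀ G : SimpleGraph (Fin n),
      ∃ Gt : SimpleGraph (Fin n),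
        thetaInt t G c ≤ thetaFrac t Gt c + ρ * (n : ℝ) ^ t ∧
        piInt t G c ≤ piFrac t Gt c + ρ * (n : ℝ) ^ t := by
  intro ρ hρ
  have ht1 : 1 ≤ t := by omega
  have hb0 : 0 ≤ c t := hc t ht1
  obtain ⟨γ, hγ0, hγ1, hγ⟩ : ∃ γ : ℝ, 0 < γ ∧ γ ≤ 1 ∧ γ * (2 * c t + 3) ≤ ρ / 2 := by
    refine ⟨min 1 (ρ / 2 / (2 * c t + 3)), lt_min one_pos (by positivity), min_le_left _ _, ?_⟩
    rw [← le_div_iff₀ (by positivity)]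
    exact min_le_right _ _
  obtain ⟨R, hR⟩ := exists_nat_gt (2 * c t / (ρ / 8))
  obtain ⟨m, hm⟩ := exists_nat_gt (2 * c t ^ 2 / (ρ / 8 * (ρ / 16)))
  obtain ⟨s₀, hs₀⟩ := exists_nat_gt (2 * (t : ℝ) * t / γ)
  have hR0 : (0 : ℝ) < R := lt_of_le_of_lt (by positivity) hR
  have hm0 : (0 : ℝ) < m := lt_of_le_of_lt (by positivity) hm
  have hmpos : 0 < m := by exact_mod_cast hm0
  have hε : 2 * c t / R + 2 * (ρ / 16 + c t ^ 2 / (m * (ρ / 16))) ≤ ρ / 2 := by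
    have h1 : 2 * c t / R ≤ ρ / 8 := by
      rw [div_lt_iff₀ (by positivity)] at hR
      rw [div_le_iff₀ hR0]
      linarith
    have h2 : 2 * (c t ^ 2 / (m * (ρ / 16))) ≤ ρ / 8 := by
      rw [div_lt_iff₀ (by positivity)] at hm
      rw [← mul_div_assoc, div_le_iff₀ (by positivity)]
      linarith
    linarith
  have hsize : ∀ j, 2 * (t : ℝ) * t ≤ γ * (m * (m ^ j * s₀) : ℕ) := by
    intro j
    have h1 : s₀ ≤ m * (m ^ j * s₀) := by
      rw [← mul_assoc, ← pow_succ']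
      exact Nat.le_mul_of_pos_left _ (pow_pos hmpos _)
    have h2 : (s₀ : ℝ) ≤ (m * (m ^ j * s₀) : ℕ) := by exact_mod_cast h1
    rw [div_lt_iff₀ hγ0] at hs₀
    nlinarith
  have ht_le : ∀ s : ℕ, 2 * (t : ℝ) * t ≤ γ * s → t ≤ s := by
    intro s hs
    have htR : (2 : ℝ) ≤ t := by exact_mod_cast ht
    have : (t : ℝ) ≤ s := by nlinarith [(Nat.cast_nonneg s : (0 : ℝ) ≤ s)]
    exact_mod_cast this
  have hts₀ : t ≤ s₀ := by
    refine ht_le _ ?_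
    rw [div_lt_iff₀ hγ0] at hs₀
    linarith
  choose a ha using fun j => exists_thetaInt_le (c := c) ht1 (ht_le _ (hsize j)) hc hγ0
  choose b hb using fun j => exists_piInt_le (c := c) ht1 (ht_le _ (hsize j)) hc hγ0
  choose d hd using fun j => exists_nat_gt (2 * (t : ℝ) * (m * (m ^ j * s₀) : ℕ) / γ)
  refine ⟨(Finset.range R).sup fun j => max (a j) (max (b j) (d j)), fun n hn G => ?_⟩
  have : Nonempty (Fin n) := ⟨⟨0, by omega⟩⟩
  obtain ⟨j, hj, ψ, h1, h2⟩ := exists_good_map (convex_Ici (1 : ℝ)) Set.self_mem_Ici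
    (convex_singleton (1 : ℝ)) (Set.mem_singleton _) ht1 hc hts₀ hmpos (by exact_mod_cast hR0)
    (by positivity : 0 < ρ / 16) hε G
  have hjn := (Finset.le_sup (f := fun j => max (a j) (max (b j) (d j)))
    (Finset.mem_range.mpr hj)).trans_lt hn
  simp only [max_lt_iff] at hjn
  obtain ⟨hja, hjb, hjd⟩ := hjn
  have hdn : 2 * (t : ℝ) * (m * (m ^ j * s₀) : ℕ) ≤ γ * n := by
    have h := (hd j).trans (Nat.cast_lt.mpr hjd)
    rw [div_lt_iff₀ hγ0] at h
    linarith
  obtain ⟨Gt, hGt⟩ := exists_blowUp ht hc hγ0 hγ1 (hsize j) hdn (G.comap ψ)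
  refine ⟨Gt, (ha j n hja G).trans ?_, (hb j n hjb G).trans ?_⟩
  · rw [thetaFrac_eq_fracVal]
    exact choose_mul_le_of_approx (avgDensity_nonneg G hc _)
      (avgDensity_le Set.self_mem_Ici ht1 G hc _) h1 (fracDensity_le Set.self_mem_Ici ht1 _ hc)
      hγ0 hγ1 (by linarith) (hGt _ (convex_Ici 1) Set.self_mem_Ici) hρ.le
  · rw [piFrac_eq_fracVal]
    exact choose_mul_le_of_approx (avgDensity_nonneg G hc _)
      (avgDensity_le (Set.mem_singleton _) ht1 G hc _) h2
      (fracDensity_le (Set.mem_singleton _) ht1 _ hc)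
      hγ0 hγ1 (by linarith) (hGt _ (convex_singleton 1) (Set.mem_singleton _)) hρ.le
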